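/- Fix k ≥ 2 and set c = e^{−1/4}/4. There exist positive constants c_d with c_d → 1 as d → ∞ such that the set P of states on (ℂ^d)^{⊗k} which are PPT across every bipartition satisfies w(P) ≥ vrad(P) ≥ c_d · c^{2^k} / d^{k/2}. In particular, lim inf_{d→∞} d^{k/2} · vrad(P) ≥ c^{2^k}. -/

import Mathlib

/-!
Write `n = d ^ k` and `N = n ^ 2 - 1`, and let `K` be the set of fully PPT states in isometric
coordinates on the traceless Hermitian matrices, centred at the maximally mixed state.

*Volume radius at most mean width.* This is the Urysohn inequality (`urysohn`) for `K`. The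
Prékopa–Leindler inequality gives Brunn–Minkowski, hence `vol (B + ε K) ≥ (1 + ε v) ^ N vol B`
with `v` the volume radius of `K`. As `B + ε K` is contained in the star body with radial function
`1 + ε h_K`, where `h_K` is the support function, integration in polar coordinates and `ε → 0`
give `v ≤ ∫ h_K`.

*Lower bound for the volume radius.* A traceless Hermitian `X` lies in `K` as soon as every partial
transpose of `X` has operator norm at most `1 / n` (`mem_pptBody_of_opN_le`). Partial transposes
are Hilbert–Schmidt isometries, so for each of the `2 ^ k ≤ n` of them a net argument and the
volume estimate for spherical caps show that the operator norm is at most `(128 / √n) ‖X‖` outside a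
set of relative volume at most `1 / (2 n)` in the unit ball (`volume_bad_le`, `deviation_bound`). So
at least half of the ball of radius `1 / (128 √n)` lies in `K`, and the volume radius is at least
`1 / (256 √n)`. Since `k ≥ 2`, the constant `(e ^ (-1/4) / 4) ^ (2 ^ k)` is at most
`(1/4) ^ 4 = 1 / 256`, so the constants `c_d` may all be taken equal to `1`.

*The lower limit.* The same operator norm estimate bounds the mean width of `K` by `129 / √n`
(`meanWidth_upper`), so the sequence `√n * vrad K` is bounded and its `liminf` is the genuine one.
-/

open scoped ComplexOrder

noncomputable section

/-- Index type for `(ℂ^d)^{⊗ k}`. -/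
abbrev MIdx (k d : ℕ) := Fin k → Fin d

/-- Operators on `(ℂ^d)^{⊗ k}`. -/
abbrev MOp (k d : ℕ) := Matrix (MIdx k d) (MIdx k d) ℂ

/-- A bipartition of the `k` subsystems is a nonempty proper subset. -/
def IsBipartition {k : ℕ} (b : Finset (Fin k)) : Prop := b.Nonempty ∧ b ≠ Finset.univ

/-- The finset of all bipartitions. -/
def bipartitions (k : ℕ) : Finset (Finset (Fin k)) :=
  Finset.univ.filter fun b => b.Nonempty ∧ b ≠ Finset.univ

/-- Index type of the subsystems in `b`. -/
abbrev SubIdx {k : ℕ} (d : ℕ) (b : Finset (Fin k)) := {i : Fin k // i ∈ b} → Fin d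

/-- Index type of the subsystems in the complement of `b`. -/
abbrev CoIdx {k : ℕ} (d : ℕ) (b : Finset (Fin k)) := {i : Fin k // i ∉ b} → Fin d

def restr {k d : ℕ} (b : Finset (Fin k)) (x : MIdx k d) : SubIdx d b := fun i => x i
def corestr {k d : ℕ} (b : Finset (Fin k)) (x : MIdx k d) : CoIdx d b := fun i => x i

/-- The pure product state `|φ⟩⟨φ| ⊗ |ψ⟩⟨ψ|` across the bipartition `{b|b̄}`. -/
def prodPure {k d : ℕ} (b : Finset (Fin k)) (φ : SubIdx d b → ℂ) (ψ : CoIdx d b → ℂ) :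
    MOp k d := fun x y =>
  φ (restr b x) * ψ (corestr b x) * star (φ (restr b y)) * star (ψ (corestr b y))

/-- States separable across the bipartition `{b|b̄}`. -/
def SepAcross {k : ℕ} (d : ℕ) (b : Finset (Fin k)) : Set (MOp k d) :=
  convexHull ℝ {M | ∃ (φ : SubIdx d b → ℂ) (ψ : CoIdx d b → ℂ),
    (∑ x, ‖φ x‖ ^ 2 = 1) ∧ (∑ y, ‖ψ y‖ ^ 2 = 1) ∧ M = prodPure b φ ψ}

/-- Biseparable states: the convex hull of the union of the separable sets over all
bipartitions. -/
def Biseparable (k d : ℕ) : Set (MOp k d) :=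
  convexHull ℝ (⋃ b ∈ bipartitions k, SepAcross d b)

/-- A state: positive semidefinite with unit trace. -/
def IsState {n : Type*} [Fintype n] (ρ : Matrix n n ℂ) : Prop :=
  ρ.PosSemidef ∧ ρ.trace = 1

/-- The positive part `[A]_+` of a Hermitian matrix `A` (junk value `0` otherwise). -/
noncomputable def matPosPart {n : Type*} [Fintype n] [DecidableEq n] (A : Matrix n n ℂ) :
    Matrix n n ℂ :=
  if hA : A.IsHermitian then
    (hA.eigenvectorUnitary : Matrix n n ℂ) *
      Matrix.diagonal (fun i => ((max (hA.eigenvalues i) 0 : ℝ) : ℂ)) *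
      star (hA.eigenvectorUnitary : Matrix n n ℂ)
  else 0

/-- `A ⪰ B` in the positive semidefinite (Loewner) order. -/
def Loewner {n : Type*} [Fintype n] (A B : Matrix n n ℂ) : Prop := (A - B).PosSemidef

end


open MeasureTheory Metric
open scoped RealInnerProductSpace

noncomputable section

/-- The uniform probability measure on the unit Euclidean sphere of `ℝ^N`. -/
def sphereUniform (N : ℕ) : Measure (sphere (0 : EuclideanSpace ℝ (Fin N)) 1) :=
  (((volume : Measure (EuclideanSpace ℝ (Fin N))).toSphere Set.univ)⁻¹) •
    (volume : Measure (EuclideanSpace ℝ (Fin N))).toSphere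

/-- `f` identifies `ℝ^N` isometrically with the subspace of traceless Hermitian matrices,
equipped with the Hilbert–Schmidt inner product `⟨A, B⟩ = Tr(AB)`. -/
structure IsHermParam {ι : Type*} [Fintype ι] {N : ℕ}
    (f : EuclideanSpace ℝ (Fin N) →ₗ[ℝ] Matrix ι ι ℂ) : Prop where
  herm : ∀ x, (f x).IsHermitian
  traceless : ∀ x, (f x).trace = 0
  inner_eq : ∀ x y, ((f x * f y).trace).re = ⟪x, y⟫
  surj : ∀ A : Matrix ι ι ℂ, A.IsHermitian → A.trace = 0 → ∃ x, f x = A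

/-- The mean width of a set of matrices, computed in the traceless Hermitian subspace
via an isometric parametrization `f`:
`w(K) = ∫_S max_{M ∈ K} Tr(X M) dσ(X)`, with `σ` the uniform probability measure on the
Hilbert–Schmidt unit sphere of traceless Hermitian matrices. -/
def matMeanWidth {ι : Type*} [Fintype ι] {N : ℕ}
    (f : EuclideanSpace ℝ (Fin N) →ₗ[ℝ] Matrix ι ι ℂ) (K : Set (Matrix ι ι ℂ)) : ℝ :=
  ∫ u, sSup ((fun M => ((f u * M).trace).re) '' K) ∂(sphereUniform N)

/-- The maximally mixed state `𝟙/n`. -/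
def maxMixed (ι : Type*) [Fintype ι] [DecidableEq ι] : Matrix ι ι ℂ :=
  ((Fintype.card ι : ℂ))⁻¹ • 1

/-- The volume radius of a set `K` of trace-one matrices, computed in the hyperplane of
trace-one Hermitian matrices (centered at the maximally mixed state) via an isometric
parametrization `f` of the traceless Hermitian subspace:
`vrad(K) = (vol K / vol B)^(1/N)`. -/
def matVolRad {ι : Type*} [Fintype ι] [DecidableEq ι] {N : ℕ}
    (f : EuclideanSpace ℝ (Fin N) →ₗ[ℝ] Matrix ι ι ℂ) (K : Set (Matrix ι ι ℂ)) : ℝ :=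
  ((volume (f ⁻¹' ((fun A => A - maxMixed ι) '' K))).toReal /
      (volume (ball (0 : EuclideanSpace ℝ (Fin N)) 1)).toReal) ^ ((N : ℝ)⁻¹)

/-- The set of density matrices (states). -/
def densityMatrices (ι : Type*) [Fintype ι] : Set (Matrix ι ι ℂ) :=
  {ρ | ρ.PosSemidef ∧ ρ.trace = 1}

end

noncomputable section

/-- The partial transposition across the bipartition `{b|b̄}` (transposing the tensor
factor corresponding to `b`). -/
def ptrans {k d : ℕ} (b : Finset (Fin k)) (M : MOp k d) : MOp k d := fun x y =>
  M (fun j => if j ∈ b then y j else x j) (fun j => if j ∈ b then x j else y j)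

/-- The set of states on `(ℂ^d)^{⊗k}` which are PPT across every bipartition. -/
def FullyPPT (k d : ℕ) : Set (MOp k d) :=
  {ρ | IsState ρ ∧ ∀ b ∈ bipartitions k, (ptrans b ρ).PosSemidef}

end

section

open Set Filter
open scoped ENNReal Pointwise Topology

/-! ### Prékopa–Leindler and Brunn–Minkowski -/

lemma ennreal_amgm {a b : ℝ} (ha : 0 < a) (hb : 0 < b) (hab : a + b = 1) (x y : ℝ≥0∞) :
    x ^ a * y ^ b ≤ ENNReal.ofReal a * x + ENNReal.ofReal b * y := by
  rcases eq_or_ne x ⊤ with rfl | hx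
  · rw [ENNReal.mul_top (by simpa using ha)]; simp
  rcases eq_or_ne y ⊤ with rfl | hy
  · rw [ENNReal.mul_top (by simpa using hb)]; simp
  lift x to NNReal using hx
  lift y to NNReal using hy
  lift a to NNReal using ha.le
  lift b to NNReal using hb.le
  have h := NNReal.geom_mean_le_arith_mean2_weighted a b x y (by exact_mod_cast hab)
  rw [← ENNReal.coe_rpow_of_nonneg _ ha.le, ← ENNReal.coe_rpow_of_nonneg _ hb.le,
    ENNReal.ofReal_coe_nnreal, ENNReal.ofReal_coe_nnreal]
  exact_mod_cast h

/-- Translates of `A` and `B` that meet in at most one point fit inside `A + B`. -/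
lemma bm_line_compact {A B C : Set ℝ} (hA : IsCompact A) (hB : IsCompact B)
    (hA' : A.Nonempty) (hB' : B.Nonempty) (hC : A + B ⊆ C) :
    volume A + volume B ≤ volume C := by
  obtain ⟨p, hp, hpm⟩ := hA.exists_isGreatest hA'
  obtain ⟨q, hq, hqm⟩ := hB.exists_isLeast hB'
  have hsub : (q +ᵥ A) ∪ (p +ᵥ B) ⊆ C := by
    rintro x (⟨y, hy, rfl⟩ | ⟨y, hy, rfl⟩)
    · exact hC ⟨y, hy, q, hq, by simp [add_comm]⟩
    · exact hC ⟨p, hp, y, hy, by simp⟩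
  have hint : (q +ᵥ A) ∩ (p +ᵥ B) ⊆ {p + q} := by
    rintro x ⟨⟨y, hy, rfl⟩, ⟨z, hz, hzx⟩⟩
    have h1 := hpm hy
    have h2 := hqm hz
    simp only [vadd_eq_add] at hzx ⊢
    simp only [mem_singleton_iff]
    linarith
  have h0 : volume ((q +ᵥ A) ∩ (p +ᵥ B)) = 0 := measure_mono_null hint (by simp)
  have hm : MeasurableSet (p +ᵥ B) := (hB.vadd p).measurableSet
  have := measure_union_add_inter (μ := volume) (q +ᵥ A) hm
  rw [h0, add_zero, measure_vadd, measure_vadd] at this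
  rw [← this]
  exact measure_mono hsub

lemma bm_line {A B C : Set ℝ} (hA : MeasurableSet A) (hB : MeasurableSet B)
    (hA' : A.Nonempty) (hB' : B.Nonempty) (hC : A + B ⊆ C) :
    volume A + volume B ≤ volume C := by
  obtain ⟨p, hp⟩ := hA'
  obtain ⟨q, hq⟩ := hB'
  have V : ∀ {S : Set ℝ}, MeasurableSet S →
      volume S = ⨆ K, ⨆ (_ : K ⊆ S ∧ IsCompact K), volume K := by
    intro S hS
    rw [hS.measure_eq_iSup_isCompact]
    simp only [iSup_and]
  rw [V hA, V hB]
  refine ENNReal.biSup_add_biSup_le' ⟨∅, empty_subset _, isCompact_empty⟩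
    ⟨∅, empty_subset _, isCompact_empty⟩ fun K hK L hL => ?_
  -- Adding one point to each compact set makes it nonempty.
  have := bm_line_compact (C := C) (hK.2.insert p) (hL.2.insert q) (insert_nonempty _ _)
    (insert_nonempty _ _)
    ((add_subset_add (insert_subset hp hK.1) (insert_subset hq hL.1)).trans hC)
  exact (add_le_add (measure_mono (subset_insert _ _)) (measure_mono (subset_insert _ _))).trans this

lemma bm_line_weighted {a b : ℝ} (ha : 0 < a) (hb : 0 < b) {A B C : Set ℝ}
    (hA : MeasurableSet A) (hB : MeasurableSet B)
    (hA' : A.Nonempty) (hB' : B.Nonempty) (hC : ∀ x ∈ A, ∀ y ∈ B, a * x + b * y ∈ C) :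
    ENNReal.ofReal a * volume A + ENNReal.ofReal b * volume B ≤ volume C := by
  have h := bm_line (hA.const_smul₀ a) (hB.const_smul₀ b) (hA'.smul_set (a := a))
    (hB'.smul_set (a := b)) (C := C) ?_
  · simpa [Measure.addHaar_smul, abs_of_pos, ha, hb] using h
  · rintro _ ⟨_, ⟨x, hx, rfl⟩, _, ⟨y, hy, rfl⟩, rfl⟩
    exact hC x hx y hy

/-- The layer-cake form of the Prékopa–Leindler inequality on the line: for functions with
supremum `1`, every superlevel set below height `1` is nonempty, so Brunn–Minkowski on the line
applies to it. -/
lemma pl_line_add {a b : ℝ} (ha : 0 < a) (hb : 0 < b) {F G H : ℝ → ℝ}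
    (hF : Measurable F) (hG : Measurable G) (hH : Measurable H)
    (hF0 : ∀ x, 0 ≤ F x) (hG0 : ∀ x, 0 ≤ G x) (hH0 : ∀ x, 0 ≤ H x)
    (hF1 : ∀ x, F x ≤ 1) (hG1 : ∀ x, G x ≤ 1)
    (hFs : ∀ s < 1, ∃ x, s < F x) (hGs : ∀ s < 1, ∃ x, s < G x)
    (h : ∀ x y, min (F x) (G y) ≤ H (a * x + b * y)) :
    ENNReal.ofReal a * (∫⁻ x, ENNReal.ofReal (F x)) +
      ENNReal.ofReal b * (∫⁻ x, ENNReal.ofReal (G x)) ≤ ∫⁻ x, ENNReal.ofReal (H x) := by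
  rw [lintegral_eq_lintegral_meas_lt _ (.of_forall hF0) hF.aemeasurable,
    lintegral_eq_lintegral_meas_lt _ (.of_forall hG0) hG.aemeasurable,
    lintegral_eq_lintegral_meas_lt _ (.of_forall hH0) hH.aemeasurable,
    ← lintegral_const_mul' _ _ ENNReal.ofReal_ne_top,
    ← lintegral_const_mul' _ _ ENNReal.ofReal_ne_top, ← lintegral_add_left]
  · apply lintegral_mono
    intro s
    rcases lt_or_ge s 1 with hs | hs
    · apply bm_line_weighted ha hb (measurableSet_lt measurable_const hF)
        (measurableSet_lt measurable_const hG) (hFs s hs) (hGs s hs)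
      intro x hx y hy
      exact (lt_min hx hy).trans_le (h x y)
    · have e1 : {x | s < F x} = ∅ := by
        ext x; simpa using (hF1 x).trans hs
      have e2 : {x | s < G x} = ∅ := by
        ext x; simpa using (hG1 x).trans hs
      simp [e1, e2]
  · refine Measurable.const_mul ?_ _
    apply Antitone.measurable
    intro s t hst
    exact measure_mono fun x hx => lt_of_le_of_lt hst hx

/-- For bounded functions, dividing by the suprema reduces to `pl_line_add`, and the weighted
AM-GM inequality turns the resulting sum into the product. -/
lemma pl_line_bdd {a b : ℝ} (ha : 0 < a) (hb : 0 < b) (hab : a + b = 1) {f g h : ℝ → ℝ≥0∞}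
    (hf : Measurable f) (hg : Measurable g) (hh : Measurable h)
    {C : ℝ≥0∞} (hC : C ≠ ⊤) (hfC : ∀ x, f x ≤ C) (hgC : ∀ x, g x ≤ C)
    (H : ∀ x y, f x ^ a * g y ^ b ≤ h (a * x + b * y)) :
    (∫⁻ x, f x) ^ a * (∫⁻ x, g x) ^ b ≤ ∫⁻ x, h x := by
  set P := ⨆ x, f x with hP
  set Q := ⨆ x, g x with hQ
  have hPt : P ≠ ⊤ := ne_top_of_le_ne_top hC (iSup_le hfC)
  have hQt : Q ≠ ⊤ := ne_top_of_le_ne_top hC (iSup_le hgC)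
  rcases eq_or_ne P 0 with hP0 | hP0
  · have : ∀ x, f x = 0 := by simpa [hP] using hP0
    simp [this, ha]
  rcases eq_or_ne Q 0 with hQ0 | hQ0
  · have : ∀ x, g x = 0 := by simpa [hQ] using hQ0
    simp [this, hb]
  have hfP : ∀ x, f x ≤ P := le_iSup f
  have hgQ : ∀ x, g x ≤ Q := le_iSup g
  set R := P ^ a * Q ^ b with hR
  have hR0 : R ≠ 0 := by
    simp [hR, hP0, hQ0, hPt, hQt, ha, hb]
  have hRt : R ≠ ⊤ := by
    apply ENNReal.mul_ne_top <;> apply ENNReal.rpow_ne_top_of_nonneg <;> first | positivity | assumption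
  have hF1 : ∀ x, f x / P ≤ 1 := fun x => ENNReal.div_le_of_le_mul (by simpa using hfP x)
  have hG1 : ∀ x, g x / Q ≤ 1 := fun x => ENNReal.div_le_of_le_mul (by simpa using hgQ x)
  have key := pl_line_add ha hb (F := fun x => (f x / P).toReal) (G := fun x => (g x / Q).toReal)
    (H := fun x => (min (h x / R) 1).toReal)
    (by fun_prop) (by fun_prop) (by fun_prop)
    (fun _ => ENNReal.toReal_nonneg) (fun _ => ENNReal.toReal_nonneg)
    (fun _ => ENNReal.toReal_nonneg)
    (fun x => ENNReal.toReal_le_of_le_ofReal zero_le_one (by simpa using hF1 x))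
    (fun x => ENNReal.toReal_le_of_le_ofReal zero_le_one (by simpa using hG1 x)) ?_ ?_ ?_
  · have e1 : ∀ x, ENNReal.ofReal (f x / P).toReal = f x / P := fun x =>
      ENNReal.ofReal_toReal (ne_top_of_le_ne_top ENNReal.one_ne_top (hF1 x))
    have e2 : ∀ x, ENNReal.ofReal (g x / Q).toReal = g x / Q := fun x =>
      ENNReal.ofReal_toReal (ne_top_of_le_ne_top ENNReal.one_ne_top (hG1 x))
    have e3 : ∀ x, ENNReal.ofReal (min (h x / R) 1).toReal = min (h x / R) 1 := fun x =>
      ENNReal.ofReal_toReal (ne_top_of_le_ne_top ENNReal.one_ne_top (min_le_right _ _))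
    simp only [e1, e2, e3] at key
    have k2 : (∫⁻ x, f x / P) ^ a * (∫⁻ x, g x / Q) ^ b ≤ ∫⁻ x, h x / R :=
      (ennreal_amgm ha hb hab _ _).trans (key.trans (lintegral_mono fun x => min_le_left _ _))
    simp only [div_eq_mul_inv] at k2
    rw [lintegral_mul_const _ hf, lintegral_mul_const _ hg, lintegral_mul_const _ hh,
      ENNReal.mul_rpow_of_nonneg _ _ ha.le, ENNReal.mul_rpow_of_nonneg _ _ hb.le,
      mul_mul_mul_comm, ENNReal.inv_rpow, ENNReal.inv_rpow,
      ← ENNReal.mul_inv (by simp [hP0, hPt]) (by simp [hQ0, hQt])] at k2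
    exact (ENNReal.mul_le_mul_iff_left (ENNReal.inv_ne_zero.2 hRt) (ENNReal.inv_ne_top.2 hR0)).1 k2
  · intro s hs
    rcases lt_or_ge s 0 with h0 | h0
    · exact ⟨0, h0.trans_le ENNReal.toReal_nonneg⟩
    have : ENNReal.ofReal s * P < P := by
      conv_rhs => rw [← one_mul P]
      exact ENNReal.mul_lt_mul_left hP0 hPt (by simpa using hs)
    obtain ⟨x, hx⟩ := lt_iSup_iff.1 this
    refine ⟨x, (ENNReal.ofReal_lt_iff_lt_toReal h0 (ne_top_of_le_ne_top ENNReal.one_ne_top (hF1 x))).1 ?_⟩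
    rwa [ENNReal.lt_div_iff_mul_lt (.inl hP0) (.inl hPt)]
  · intro s hs
    rcases lt_or_ge s 0 with h0 | h0
    · exact ⟨0, h0.trans_le ENNReal.toReal_nonneg⟩
    have : ENNReal.ofReal s * Q < Q := by
      conv_rhs => rw [← one_mul Q]
      exact ENNReal.mul_lt_mul_left hQ0 hQt (by simpa using hs)
    obtain ⟨x, hx⟩ := lt_iSup_iff.1 this
    refine ⟨x, (ENNReal.ofReal_lt_iff_lt_toReal h0 (ne_top_of_le_ne_top ENNReal.one_ne_top (hG1 x))).1 ?_⟩
    rwa [ENNReal.lt_div_iff_mul_lt (.inl hQ0) (.inl hQt)]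
  · intro x y
    have t1 := ne_top_of_le_ne_top ENNReal.one_ne_top (hF1 x)
    have t2 := ne_top_of_le_ne_top ENNReal.one_ne_top (hG1 y)
    rw [← ENNReal.toReal_min t1 t2]
    refine ENNReal.toReal_mono (ne_top_of_le_ne_top ENNReal.one_ne_top (min_le_right _ _)) ?_
    refine le_min ?_ ((min_le_left _ _).trans (hF1 x))
    set m := min (f x / P) (g y / Q)
    calc m = m ^ a * m ^ b := by
          rw [← ENNReal.rpow_add_of_nonneg _ _ ha.le hb.le, hab, ENNReal.rpow_one]
      _ ≤ (f x / P) ^ a * (g y / Q) ^ b := by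
          gcongr
          · exact min_le_left _ _
          · exact min_le_right _ _
      _ = (f x ^ a * g y ^ b) / R := by
          rw [ENNReal.div_rpow_of_nonneg _ _ ha.le, ENNReal.div_rpow_of_nonneg _ _ hb.le,
            div_eq_mul_inv, div_eq_mul_inv, div_eq_mul_inv, mul_mul_mul_comm,
            ← ENNReal.mul_inv (by simp [hP0, hPt]) (by simp [hQ0, hQt])]
      _ ≤ _ := by gcongr; exact H x y

lemma pl_line {a b : ℝ} (ha : 0 < a) (hb : 0 < b) (hab : a + b = 1) {f g h : ℝ → ℝ≥0∞}
    (hf : Measurable f) (hg : Measurable g) (hh : Measurable h)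
    (H : ∀ x y, f x ^ a * g y ^ b ≤ h (a * x + b * y)) :
    (∫⁻ x, f x) ^ a * (∫⁻ x, g x) ^ b ≤ ∫⁻ x, h x := by
  rcases eq_or_ne (∫⁻ x, f x) 0 with h0 | h0
  · simp [h0, ha]
  rcases eq_or_ne (∫⁻ x, g x) 0 with h0' | h0'
  · simp [h0', hb]
  have lim : ∀ {u : ℝ → ℝ≥0∞}, Measurable u →
      Tendsto (fun n : ℕ => ∫⁻ x, min (u x) n) atTop (𝓝 (∫⁻ x, u x)) := by
    intro u hu
    refine lintegral_tendsto_of_tendsto_of_monotone (fun n => by fun_prop) (.of_forall ?_)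
      (.of_forall ?_)
    · intro x m n hmn
      dsimp only
      gcongr
    · intro x
      have := (tendsto_const_nhds (x := u x)).min ENNReal.tendsto_nat_nhds_top
      simpa using this
  have ne1 : (∫⁻ x, f x) ^ a ≠ 0 := by simp [h0, ha.le, ha]
  have ne2 : (∫⁻ x, g x) ^ b ≠ 0 := by simp [h0', hb.le, hb]
  have T := ENNReal.Tendsto.mul ((lim hf).ennrpow_const a) (.inl ne1) ((lim hg).ennrpow_const b)
    (.inl ne2)
  refine le_of_tendsto' T fun n => ?_
  refine pl_line_bdd ha hb hab (by fun_prop) (by fun_prop) hh (C := n) (by simp)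
    (fun x => min_le_right _ _) (fun x => min_le_right _ _) fun x y => le_trans ?_ (H x y)
  gcongr <;> exact min_le_left _ _

/-- The Prékopa–Leindler inequality, by induction on the dimension and Tonelli. -/
lemma prekopa_leindler {a b : ℝ} (ha : 0 < a) (hb : 0 < b) (hab : a + b = 1) (n : ℕ) :
    ∀ {f g h : (Fin n → ℝ) → ℝ≥0∞} (_ : Measurable f) (_ : Measurable g) (_ : Measurable h)
    (_ : ∀ x y, f x ^ a * g y ^ b ≤ h (a • x + b • y)),
    (∫⁻ x, f x) ^ a * (∫⁻ x, g x) ^ b ≤ ∫⁻ x, h x := by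
  induction n with
  | zero =>
    intro f g h hf hg hh H
    simp only [volume_pi, Measure.pi_of_empty (fun _ : Fin 0 => (volume : Measure ℝ)) 0]
    rw [lintegral_dirac, lintegral_dirac, lintegral_dirac]
    exact (H 0 0).trans_eq (congrArg h (Subsingleton.elim _ _))
  | succ n ih =>
    intro f g h hf hg hh H
    set e := MeasurableEquiv.piFinSuccAbove (fun _ : Fin (n+1) => ℝ) 0
    have he : MeasurePreserving e.symm (volume.prod volume) volume :=
      (volume_preserving_piFinSuccAbove (fun _ : Fin (n+1) => ℝ) 0).symm
    have I : ∀ {u : (Fin (n+1) → ℝ) → ℝ≥0∞}, Measurable u →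
        ∫⁻ x, u x = ∫⁻ s, ∫⁻ z, u (e.symm (s, z)) := by
      intro u hu
      rw [← he.lintegral_comp hu, lintegral_prod _ (by fun_prop)]
    rw [I hf, I hg, I hh]
    have M : ∀ {u : (Fin (n+1) → ℝ) → ℝ≥0∞}, Measurable u →
        Measurable fun s : ℝ => ∫⁻ z, u (e.symm (s, z)) := fun hu =>
      Measurable.lintegral_prod_right' (f := fun p => _) (hu.comp e.symm.measurable)
    refine pl_line ha hb hab (M hf) (M hg) (M hh) fun s t => ?_
    refine ih (by fun_prop) (by fun_prop) (by fun_prop) fun x y => ?_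
    convert H (e.symm (s, x)) (e.symm (t, y)) using 2
    ext i
    refine Fin.cases ?_ (fun j => ?_) i <;> simp [e, MeasurableEquiv.piFinSuccAbove]

/-- The Brunn–Minkowski inequality in multiplicative form: Prékopa–Leindler for indicators. -/
lemma brunn_minkowski {a b : ℝ} (ha : 0 < a) (hb : 0 < b) (hab : a + b = 1) {n : ℕ}
    {A B C : Set (EuclideanSpace ℝ (Fin n))} (hA : MeasurableSet A) (hB : MeasurableSet B)
    (hC : MeasurableSet C) (h : ∀ x ∈ A, ∀ y ∈ B, a • x + b • y ∈ C) :
    volume A ^ a * volume B ^ b ≤ volume C := by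
  have hv := PiLp.volume_preserving_toLp (Fin n)
  have hm : Measurable (@WithLp.toLp 2 (Fin n → ℝ)) := hv.measurable
  have V : ∀ {S : Set (EuclideanSpace ℝ (Fin n))}, MeasurableSet S →
      volume S = ∫⁻ x : Fin n → ℝ, S.indicator 1 (WithLp.toLp 2 x) := by
    intro S hS
    rw [hv.lintegral_comp (measurable_one.indicator hS), lintegral_indicator_one hS]
  rw [V hA, V hB, V hC]
  refine prekopa_leindler ha hb hab n ((measurable_one.indicator hA).comp hm)
    ((measurable_one.indicator hB).comp hm) ((measurable_one.indicator hC).comp hm) fun x y => ?_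
  by_cases hx : WithLp.toLp 2 x ∈ A
  · by_cases hy : WithLp.toLp 2 y ∈ B
    · have := h _ hx _ hy
      simp [hx, hy, this]
    · simp [hy, hb]
  · simp [hx, ha]

/-! ### The Urysohn inequality -/

/-- The support function `x ↦ sup_{y ∈ K} ⟪x, y⟫` (with the junk value `0` when the supremum is
infinite or `K` is empty). -/
noncomputable def suppFun {N : ℕ} (K : Set (EuclideanSpace ℝ (Fin N)))
    (x : EuclideanSpace ℝ (Fin N)) : ℝ :=
  sSup ((fun y => ⟪x, y⟫) '' K)

lemma inner_le_suppFun {N : ℕ} {K : Set (EuclideanSpace ℝ (Fin N))} {R : ℝ}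
    (hR : ∀ y ∈ K, ‖y‖ ≤ R) (x : EuclideanSpace ℝ (Fin N)) {y : EuclideanSpace ℝ (Fin N)}
    (hy : y ∈ K) : ⟪x, y⟫ ≤ suppFun K x := by
  refine le_csSup ⟨‖x‖ * R, ?_⟩ ⟨y, hy, rfl⟩
  rintro _ ⟨z, hz, rfl⟩
  exact (real_inner_le_norm x z).trans (by gcongr; exact hR z hz)

lemma suppFun_nonneg {N : ℕ} {K : Set (EuclideanSpace ℝ (Fin N))} {R : ℝ}
    (hR : ∀ y ∈ K, ‖y‖ ≤ R) (h0 : 0 ∈ K) (x : EuclideanSpace ℝ (Fin N)) : 0 ≤ suppFun K x := by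
  simpa using inner_le_suppFun hR x h0

lemma suppFun_le {N : ℕ} {K : Set (EuclideanSpace ℝ (Fin N))} {R : ℝ}
    (hR : ∀ y ∈ K, ‖y‖ ≤ R) (h0 : 0 ∈ K) (x : EuclideanSpace ℝ (Fin N)) :
    suppFun K x ≤ ‖x‖ * R := by
  refine csSup_le ⟨_, 0, h0, rfl⟩ ?_
  rintro _ ⟨z, hz, rfl⟩
  exact (real_inner_le_norm x z).trans (by gcongr; exact hR z hz)

lemma continuous_suppFun {N : ℕ} {K : Set (EuclideanSpace ℝ (Fin N))} {R : ℝ}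
    (hR : ∀ y ∈ K, ‖y‖ ≤ R) (h0 : 0 ∈ K) : Continuous (suppFun K) := by
  have hR0 : 0 ≤ R := by simpa using hR 0 h0
  refine (LipschitzWith.of_le_add_mul R.toNNReal fun x x' => ?_).continuous
  refine csSup_le ⟨_, 0, h0, rfl⟩ ?_
  rintro _ ⟨z, hz, rfl⟩
  have e : ⟪x, z⟫ = ⟪x', z⟫ + ⟪x - x', z⟫ := by rw [inner_sub_left]; ring
  have h2 := (real_inner_le_norm (x - x') z).trans
    (mul_le_mul_of_nonneg_left (hR z hz) (norm_nonneg _))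
  have h1 := inner_le_suppFun hR x' hz
  rw [Real.coe_toNNReal _ hR0, dist_eq_norm]
  dsimp only
  linarith

/-- The volume, in polar coordinates, of the punctured star body
`{x ≠ 0 | ‖x‖ < ρ (x / ‖x‖)}`. -/
lemma volume_starBody {N : ℕ} (hN : 0 < N) {ρ : sphere (0 : EuclideanSpace ℝ (Fin N)) 1 → ℝ}
    (hρ : Continuous ρ) (hρ0 : ∀ u, 0 < ρ u) :
    volume ((Subtype.val : ({0}ᶜ : Set (EuclideanSpace ℝ (Fin N))) → _) ''
      (homeomorphUnitSphereProd (EuclideanSpace ℝ (Fin N)) ⁻¹' {p | (p.2 : ℝ) < ρ p.1})) =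
    ∫⁻ u, ENNReal.ofReal (ρ u ^ N / N)
      ∂(volume : Measure (EuclideanSpace ℝ (Fin N))).toSphere := by
  have hmp := (volume : Measure (EuclideanSpace ℝ (Fin N))).measurePreserving_homeomorphUnitSphereProd
  have hT : MeasurableSet {p : sphere (0 : EuclideanSpace ℝ (Fin N)) 1 × Ioi (0 : ℝ) |
      (p.2 : ℝ) < ρ p.1} :=
    (isOpen_lt (by fun_prop) (by fun_prop)).measurableSet
  rw [← comap_subtype_coe_apply (measurableSet_singleton _).compl,
    hmp.measure_preimage hT.nullMeasurableSet, Measure.prod_apply hT]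
  refine lintegral_congr fun u => ?_
  have : Prod.mk u ⁻¹' {p : sphere (0 : EuclideanSpace ℝ (Fin N)) 1 × Ioi (0 : ℝ) |
      (p.2 : ℝ) < ρ p.1} = Iio ⟨ρ u, hρ0 u⟩ := by
    ext r; simp [← Subtype.coe_lt_coe]
  rw [this, Measure.volumeIoiPow_apply_Iio, finrank_euclideanSpace, Fintype.card_fin,
    Nat.sub_add_cancel hN, Nat.cast_sub hN]
  simp

lemma isProbabilityMeasure_sphereUniform {N : ℕ} (hN : 0 < N) :
    IsProbabilityMeasure (sphereUniform N) := by
  constructor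
  have : Nontrivial (EuclideanSpace ℝ (Fin N)) := by
    apply Module.nontrivial_of_finrank_pos (R := ℝ); simpa using hN
  simp only [sphereUniform, Measure.smul_apply, smul_eq_mul]
  exact ENNReal.inv_mul_cancel (by simp [-Measure.toSphere_apply_univ]) (measure_ne_top _ _)

/-- `volume_starBody` relative to the volume of the unit ball and the uniform probability
measure. -/
lemma lintegral_sphereUniform {N : ℕ} (hN : 0 < N)
    {ρ : sphere (0 : EuclideanSpace ℝ (Fin N)) 1 → ℝ}
    (hρ : Continuous ρ) (hρ0 : ∀ u, 0 < ρ u) :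
    volume ((Subtype.val : ({0}ᶜ : Set (EuclideanSpace ℝ (Fin N))) → _) ''
      (homeomorphUnitSphereProd (EuclideanSpace ℝ (Fin N)) ⁻¹' {p | (p.2 : ℝ) < ρ p.1})) =
    (∫⁻ u, ENNReal.ofReal (ρ u ^ N) ∂sphereUniform N) *
      volume (ball (0 : EuclideanSpace ℝ (Fin N)) 1) := by
  have hb0 : volume (ball (0 : EuclideanSpace ℝ (Fin N)) 1) ≠ 0 :=
    (measure_ball_pos _ _ one_pos).ne'
  have hbt : volume (ball (0 : EuclideanSpace ℝ (Fin N)) 1) ≠ ⊤ := measure_ball_lt_top.ne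
  have hN0 : (N : ℝ≥0∞) ≠ 0 := by exact_mod_cast hN.ne'
  rw [volume_starBody hN hρ hρ0, sphereUniform, lintegral_smul_measure,
    Measure.toSphere_apply_univ, finrank_euclideanSpace, Fintype.card_fin, smul_eq_mul,
    ENNReal.mul_inv (.inl hN0) (.inl (by simp))]
  simp only [div_eq_mul_inv]
  have : ∀ u, ENNReal.ofReal (ρ u ^ N * (N : ℝ)⁻¹) = ENNReal.ofReal (ρ u ^ N) * (N : ℝ≥0∞)⁻¹ := by
    intro u
    rw [ENNReal.ofReal_mul (pow_nonneg (hρ0 u).le _), ENNReal.ofReal_inv_of_pos (by exact_mod_cast hN),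
      ENNReal.ofReal_natCast]
  simp only [this]
  rw [lintegral_mul_const _ (by fun_prop)]
  set I := ∫⁻ u, ENNReal.ofReal (ρ u ^ N) ∂(volume : Measure (EuclideanSpace ℝ (Fin N))).toSphere
  set V := volume (ball (0 : EuclideanSpace ℝ (Fin N)) 1)
  calc I * (N : ℝ≥0∞)⁻¹ = I * (N : ℝ≥0∞)⁻¹ * (V⁻¹ * V) := by
        rw [ENNReal.inv_mul_cancel hb0 hbt, mul_one]
    _ = _ := by ring

/-- The Minkowski combination `B + ε K` is contained in the star body with radial function
`1 + ε h_K`, since a radial function never exceeds the support function. Its volume is at least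
`(1 + ε v) ^ N vol B` by Brunn–Minkowski, where `v` is the volume radius of `K`. -/
lemma urysohn_step {N : ℕ} (hN : 0 < N) {K : Set (EuclideanSpace ℝ (Fin N))}
    (hK : MeasurableSet K) {R : ℝ} (hR : ∀ y ∈ K, ‖y‖ ≤ R) (h0 : 0 ∈ K) {v : ℝ} (hv : 0 < v)
    (hvol : volume K = ENNReal.ofReal (v ^ N) * volume (ball (0 : EuclideanSpace ℝ (Fin N)) 1))
    {ε : ℝ} (hε : 0 < ε) :
    ENNReal.ofReal ((1 + ε * v) ^ N) ≤
      ∫⁻ u : sphere (0 : EuclideanSpace ℝ (Fin N)) 1,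
        ENNReal.ofReal ((1 + ε * suppFun K u) ^ N) ∂sphereUniform N := by
  have hb0 : volume (ball (0 : EuclideanSpace ℝ (Fin N)) 1) ≠ 0 :=
    (measure_ball_pos _ _ one_pos).ne'
  have hbt : volume (ball (0 : EuclideanSpace ℝ (Fin N)) 1) ≠ ⊤ := measure_ball_lt_top.ne
  set V := volume (ball (0 : EuclideanSpace ℝ (Fin N)) 1)
  have hcont : Continuous fun u : sphere (0 : EuclideanSpace ℝ (Fin N)) 1 => 1 + ε * suppFun K u := by
    have := (continuous_suppFun hR h0).comp
      (continuous_subtype_val (p := fun x => x ∈ sphere (0 : EuclideanSpace ℝ (Fin N)) 1))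
    exact continuous_const.add (continuous_const.mul this)
  have hpos : ∀ u : sphere (0 : EuclideanSpace ℝ (Fin N)) 1, 0 < 1 + ε * suppFun K u := fun u => by
    have := suppFun_nonneg hR h0 (u : EuclideanSpace ℝ (Fin N))
    positivity
  have hstar := lintegral_sphereUniform hN hcont hpos
  set S := (Subtype.val : ({0}ᶜ : Set (EuclideanSpace ℝ (Fin N))) → _) ''
      (homeomorphUnitSphereProd (EuclideanSpace ℝ (Fin N)) ⁻¹'
        {p | (p.2 : ℝ) < 1 + ε * suppFun K p.1}) with hS
  have hSm : MeasurableSet S := by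
    refine (MeasurableEmbedding.subtype_coe (measurableSet_singleton _).compl).measurableSet_image.2 ?_
    refine (Homeomorph.measurable _) (IsOpen.measurableSet (isOpen_lt (by fun_prop) ?_))
    exact hcont.comp continuous_fst
  set s := 1 + ε * v with hs
  -- Both `s B` and `(s / v) K` have volume `s ^ N vol B`, and their combination with weights
  -- `1 / s` and `ε v / s` is `B + ε K`.
  have hs0 : 0 < s := by positivity
  have bm := brunn_minkowski (a := 1 / s) (b := ε * v / s) (by positivity) (by positivity)
    (by field_simp; exact hs.symm) (measurableSet_ball (x := (0 : EuclideanSpace ℝ (Fin N))) (ε := s))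
    (hK.const_smul₀ (s / v)) (hSm.union (measurableSet_singleton 0)) ?_
  · have e1 : volume (ball (0 : EuclideanSpace ℝ (Fin N)) s) = ENNReal.ofReal (s ^ N) * V := by
      rw [Measure.addHaar_ball_of_pos _ _ hs0]; simp [V]
    have e2 : volume ((s / v) • K) = ENNReal.ofReal (s ^ N) * V := by
      rw [Measure.addHaar_smul_of_nonneg _ (by positivity), hvol, ← mul_assoc,
        ← ENNReal.ofReal_mul (by positivity), finrank_euclideanSpace, Fintype.card_fin, ← mul_pow,
        div_mul_cancel₀ _ hv.ne']
    have e3 : volume (S ∪ {0}) ≤ volume S := by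
      have : Nontrivial (EuclideanSpace ℝ (Fin N)) := by
        apply Module.nontrivial_of_finrank_pos (R := ℝ); simpa using hN
      refine (measure_union_le _ _).trans ?_
      simp
    rw [e1, e2, ← ENNReal.rpow_add_of_nonneg _ _ (by positivity) (by positivity)] at bm
    have e4 : 1 / s + ε * v / s = 1 := by field_simp; exact hs.symm
    rw [e4, ENNReal.rpow_one] at bm
    have := (bm.trans e3).trans hstar.le
    exact (ENNReal.mul_le_mul_iff_left hb0 hbt).1 this
  · rintro x hx _ ⟨y, hy, rfl⟩
    set z := (1 / s) • x + (ε * v / s) • (s / v) • y with hz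
    have hz' : z = (1 / s) • x + ε • y := by
      rw [hz, smul_smul]; congr 2; field_simp
    by_cases hz0 : z = 0
    · right; exact hz0
    left
    refine ⟨⟨z, hz0⟩, ?_, rfl⟩
    simp only [mem_preimage, mem_ofPred_eq, homeomorphUnitSphereProd_apply_snd_coe,
      homeomorphUnitSphereProd_apply_fst_coe]
    set u := ‖z‖⁻¹ • z
    have hzn : ‖z‖ ≠ 0 := norm_ne_zero_iff.2 hz0
    have hu : ‖u‖ = 1 := by simp [u, norm_smul, hzn]
    have h1 : ⟪u, z⟫ = ‖z‖ := by
      simp only [u, real_inner_smul_left, real_inner_self_eq_norm_sq]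
      field_simp
    have h2 : ⟪u, (1 / s) • x⟫ < 1 := by
      refine (real_inner_le_norm _ _).trans_lt ?_
      rw [hu, one_mul, norm_smul, Real.norm_of_nonneg (by positivity), one_div, inv_mul_lt_iff₀ hs0]
      simpa using hx
    have h3 := inner_le_suppFun hR u hy
    rw [← h1]
    conv_lhs => rw [hz']
    rw [inner_add_right, real_inner_smul_right _ y]
    have := mul_le_mul_of_nonneg_left h3 hε.le
    linarith

/-- The Urysohn inequality: the volume radius is at most the mean width. It is the first-order term
of `urysohn_step` as `ε → 0`. -/
lemma urysohn {N : ℕ} (hN : 0 < N) {K : Set (EuclideanSpace ℝ (Fin N))}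
    (hK : MeasurableSet K) {R : ℝ} (hR : ∀ y ∈ K, ‖y‖ ≤ R) (h0 : 0 ∈ K) :
    ((volume K).toReal / (volume (ball (0 : EuclideanSpace ℝ (Fin N)) 1)).toReal) ^ ((N : ℝ)⁻¹) ≤
      ∫ u : sphere (0 : EuclideanSpace ℝ (Fin N)) 1, suppFun K u ∂sphereUniform N := by
  have hb0 : volume (ball (0 : EuclideanSpace ℝ (Fin N)) 1) ≠ 0 :=
    (measure_ball_pos _ _ one_pos).ne'
  have hbt : volume (ball (0 : EuclideanSpace ℝ (Fin N)) 1) ≠ ⊤ := measure_ball_lt_top.ne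
  have hKt : volume K ≠ ⊤ := by
    refine ne_top_of_le_ne_top (measure_closedBall_lt_top (x := 0) (r := R)).ne (measure_mono ?_)
    intro y hy; simpa using hR y hy
  have hR0 : 0 ≤ R := by simpa using hR 0 h0
  have := isProbabilityMeasure_sphereUniform hN
  set v := ((volume K).toReal / (volume (ball (0 : EuclideanSpace ℝ (Fin N)) 1)).toReal) ^ ((N : ℝ)⁻¹)
    with hv
  set w := ∫ u : sphere (0 : EuclideanSpace ℝ (Fin N)) 1, suppFun K u ∂sphereUniform N with hw
  have hw0 : 0 ≤ w := integral_nonneg fun u => suppFun_nonneg hR h0 _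
  have hv0 : 0 ≤ v := by positivity
  rcases hv0.eq_or_lt with hv0 | hv0
  · rw [← hv0]; exact hw0
  have hvN : v ^ N = (volume K).toReal / (volume (ball (0 : EuclideanSpace ℝ (Fin N)) 1)).toReal := by
    rw [hv, Real.rpow_inv_natCast_pow (by positivity) hN.ne']
  have hvol : volume K = ENNReal.ofReal (v ^ N) * volume (ball (0 : EuclideanSpace ℝ (Fin N)) 1) := by
    rw [hvN, ENNReal.ofReal_div_of_pos (ENNReal.toReal_pos hb0 hbt), ENNReal.ofReal_toReal hKt,
      ENNReal.ofReal_toReal hbt, ENNReal.div_mul_cancel hb0 hbt]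
  have hcont : Continuous fun u : sphere (0 : EuclideanSpace ℝ (Fin N)) 1 => suppFun K u :=
    (continuous_suppFun hR h0).comp continuous_subtype_val
  have hint : Integrable (fun u : sphere (0 : EuclideanSpace ℝ (Fin N)) 1 => suppFun K u)
      (sphereUniform N) := by
    refine Integrable.of_bound hcont.aestronglyMeasurable R (.of_forall fun u => ?_)
    rw [Real.norm_of_nonneg (suppFun_nonneg hR h0 _)]
    simpa using suppFun_le hR h0 (u : EuclideanSpace ℝ (Fin N))
  have hNr : (0 : ℝ) < N := by exact_mod_cast hN
  have key : ∀ ε : ℝ, 0 < ε → N * ε * R ≤ 1 → v ≤ w + N * ε * R ^ 2 := by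
    intro ε hε hεR
    have h1 := urysohn_step hN hK hR h0 hv0 hvol hε
    have h2 : ∀ u : sphere (0 : EuclideanSpace ℝ (Fin N)) 1,
        (1 + ε * suppFun K u) ^ N ≤ (1 + (N * ε * R) ^ 2) + N * ε * suppFun K u := by
      intro u
      have p0 := suppFun_nonneg hR h0 (u : EuclideanSpace ℝ (Fin N))
      have p1 : suppFun K u ≤ R := by simpa using suppFun_le hR h0 (u : EuclideanSpace ℝ (Fin N))
      set t := suppFun K u
      have q0 : 0 ≤ N * ε * t := by positivity
      have q1 : N * ε * t ≤ N * ε * R := by gcongr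
      have e1 : (1 + ε * t) ^ N ≤ Real.exp (N * ε * t) := by
        rw [mul_assoc, Real.exp_nat_mul]
        gcongr
        linarith [Real.add_one_le_exp (ε * t)]
      have e2 := Real.abs_exp_sub_one_sub_id_le (x := N * ε * t)
        (by rw [abs_of_nonneg q0]; linarith)
      have e3 := (abs_le.1 e2).2
      have e4 : (N * ε * t) ^ 2 ≤ (N * ε * R) ^ 2 := by gcongr
      linarith
    have h3 : ENNReal.ofReal ((1 + ε * v) ^ N) ≤
        ENNReal.ofReal ((1 + (N * ε * R) ^ 2) + N * ε * w) := by
      refine h1.trans ((lintegral_mono fun u => ENNReal.ofReal_le_ofReal (h2 u)).trans ?_)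
      rw [← ofReal_integral_eq_lintegral_ofReal]
      · rw [integral_add (integrable_const _) (hint.const_mul _), integral_const_mul]
        simp [hw]
      · exact (integrable_const _).add (hint.const_mul _)
      · refine .of_forall fun u => ?_
        have p0 := suppFun_nonneg hR h0 (u : EuclideanSpace ℝ (Fin N))
        simp only [Pi.zero_apply]
        positivity
    rw [ENNReal.ofReal_le_ofReal_iff (by positivity)] at h3
    have h4 := one_add_mul_le_pow (a := ε * v) (by nlinarith [mul_pos hε hv0]) N
    have h5 : N * ε * v ≤ N * ε * (w + N * ε * R ^ 2) := by nlinarith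
    exact le_of_mul_le_mul_left h5 (by positivity)
  have hlim : Tendsto (fun ε : ℝ => w + N * ε * R ^ 2) (𝓝[>] 0) (𝓝 w) := by
    have : Tendsto (fun ε : ℝ => w + N * ε * R ^ 2) (𝓝 0) (𝓝 (w + N * 0 * R ^ 2)) :=
      Continuous.tendsto (by fun_prop) 0
    simp only [mul_zero, zero_mul, add_zero] at this
    exact this.mono_left nhdsWithin_le_nhds
  refine ge_of_tendsto hlim ?_
  have hev : ∀ᶠ ε : ℝ in 𝓝[>] 0, N * ε * R < 1 := by
    have : Tendsto (fun ε : ℝ => N * ε * R) (𝓝 0) (𝓝 (N * 0 * R)) :=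
      Continuous.tendsto (by fun_prop) 0
    simp only [mul_zero, zero_mul] at this
    exact (this.mono_left nhdsWithin_le_nhds).eventually_lt_const one_pos
  filter_upwards [hev, self_mem_nhdsWithin] with ε h1 h2
  exact key ε h2 h1.le

/-! ### Operator norm of random matrices -/

/-- The cone-like cap `{s ‖x‖ < ⟪p, x⟫}` of the unit ball lies in the ball of radius
`exp (-3 s² / 8)` centred at `(s / 2) p`. -/
lemma volume_cap_le {N : ℕ} {p : EuclideanSpace ℝ (Fin N)} (hp : ‖p‖ ≤ 1) {s : ℝ} (hs : 0 ≤ s) :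
    volume {x : EuclideanSpace ℝ (Fin N) | x ∈ ball 0 1 ∧ s * ‖x‖ < ⟪p, x⟫} ≤
      ENNReal.ofReal (Real.exp (-(3 / 8 * N * s ^ 2))) *
        volume (ball (0 : EuclideanSpace ℝ (Fin N)) 1) := by
  rcases le_or_gt 1 s with h1 | h1
  · have : {x : EuclideanSpace ℝ (Fin N) | x ∈ ball 0 1 ∧ s * ‖x‖ < ⟪p, x⟫} = ∅ := by
      ext x
      simp only [mem_ofPred_eq, mem_empty_iff_false, iff_false, not_and, not_lt]
      intro _
      refine (real_inner_le_norm p x).trans ?_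
      gcongr
      exact hp.trans h1
    rw [this, measure_empty]
    exact bot_le
  have hs2 : s ^ 2 ≤ 1 := by nlinarith
  set ρ := Real.exp (-(3 / 8 * s ^ 2)) with hρ
  have hsub : {x : EuclideanSpace ℝ (Fin N) | x ∈ ball 0 1 ∧ s * ‖x‖ < ⟪p, x⟫} ⊆
      closedBall ((s / 2) • p) ρ := by
    rintro x ⟨hx, hx'⟩
    rw [mem_closedBall, dist_eq_norm]
    have hx1 : ‖x‖ < 1 := by simpa using hx
    have e : ‖x - (s / 2) • p‖ ^ 2 = ‖x‖ ^ 2 - s * ⟪p, x⟫ + s ^ 2 / 4 * ‖p‖ ^ 2 := by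
      rw [norm_sub_sq_real, real_inner_smul_right, norm_smul, mul_pow, real_inner_comm,
        Real.norm_eq_abs, sq_abs]
      ring
    have hp2 : ‖p‖ ^ 2 ≤ 1 := by nlinarith [norm_nonneg p]
    have b1 : s ^ 2 / 4 * ‖p‖ ^ 2 ≤ s ^ 2 / 4 := by nlinarith [sq_nonneg s]
    have b2 : s * (s * ‖x‖) ≤ s * ⟪p, x⟫ := by gcongr
    have b3 : ‖x‖ ^ 2 - s * (s * ‖x‖) + s ^ 2 - 1 ≤ 0 := by
      have : ‖x‖ ^ 2 - s * (s * ‖x‖) + s ^ 2 - 1 = -((1 - ‖x‖) * (‖x‖ + (1 - s ^ 2))) := by ring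
      rw [this, neg_nonpos]
      exact mul_nonneg (by linarith) (by linarith [norm_nonneg x])
    have b4 : -(3 / 4 * s ^ 2) + 1 ≤ ρ ^ 2 := by
      rw [hρ, ← Real.exp_nat_mul]
      refine (Real.add_one_le_exp _).trans_eq ?_
      congr 1; push_cast; ring
    refine abs_le_of_sq_le_sq' ?_ (Real.exp_pos _).le |>.2
    rw [e]; linarith
  refine (measure_mono hsub).trans ?_
  rw [Measure.addHaar_closedBall _ _ (Real.exp_pos _).le, finrank_euclideanSpace, Fintype.card_fin,
    ← Real.exp_nat_mul]
  refine le_of_eq ?_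
  congr 3; ring

/-- A `1/2`-net of the unit ball with at most `5 ^ dim` points: half of a maximal `1`-separated
subset of the ball of radius `2`. -/
lemma exists_halfNet (E : Type*) [NormedAddCommGroup E] [NormedSpace ℝ E] [FiniteDimensional ℝ E] :
    ∃ S : Finset E, S.card ≤ 5 ^ Module.finrank ℝ E ∧ (∀ c ∈ S, ‖c‖ ≤ 1) ∧
      ∀ x : E, ‖x‖ ≤ 1 → ∃ c ∈ S, ‖x - c‖ ≤ 1 / 2 := by
  classical
  set Q : Set ℕ := {m | ∃ T : Finset E, ((∀ c ∈ T, ‖c‖ ≤ 2) ∧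
    ∀ c ∈ T, ∀ e ∈ T, c ≠ e → 1 ≤ ‖c - e‖) ∧ T.card = m} with hQ
  have hne : Q.Nonempty := ⟨0, ∅, by simp, rfl⟩
  have hbd : BddAbove Q := ⟨5 ^ Module.finrank ℝ E, by
    rintro _ ⟨T, hT, rfl⟩
    exact Besicovitch.card_le_of_separated T hT.1 hT.2⟩
  obtain ⟨T, ⟨hT1, hT2⟩, hT3⟩ := Nat.sSup_mem hne hbd
  have hmax : ∀ x : E, ‖x‖ ≤ 2 → ∃ c ∈ T, ‖x - c‖ < 1 := by
    intro x hx
    by_contra! hcon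
    have hxT : x ∉ T := fun h => by simpa using (hcon x h).trans_lt' zero_lt_one
    have hmem : T.card + 1 ∈ Q := by
      refine ⟨insert x T, ⟨?_, ?_⟩, Finset.card_insert_of_notMem hxT⟩
      · intro c hc
        rcases Finset.mem_insert.1 hc with rfl | hc
        · exact hx
        · exact hT1 c hc
      · intro c hc e he hce
        rcases Finset.mem_insert.1 hc with hc | hc <;> rcases Finset.mem_insert.1 he with he | he
        · exact absurd (hc.trans he.symm) hce
        · rw [hc]; exact hcon e he
        · rw [he, norm_sub_rev]; exact hcon c hc
        · exact hT2 c hc e he hce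
    have := le_csSup hbd hmem
    omega
  refine ⟨T.image fun c => (1 / 2 : ℝ) • c, ?_, ?_, ?_⟩
  · exact Finset.card_image_le.trans (Besicovitch.card_le_of_separated T hT1 hT2)
  · intro c hc
    obtain ⟨e, he, rfl⟩ := Finset.mem_image.1 hc
    rw [norm_smul]
    have := hT1 e he
    norm_num
    linarith
  · intro x hx
    obtain ⟨c, hc, hxc⟩ := hmax ((2 : ℝ) • x) (by rw [norm_smul]; norm_num; linarith)
    refine ⟨_, Finset.mem_image_of_mem _ hc, ?_⟩
    have e : x - (1 / 2 : ℝ) • c = (1 / 2 : ℝ) • ((2 : ℝ) • x - c) := by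
      rw [smul_sub, smul_smul]; norm_num
    rw [e, norm_smul]
    norm_num
    linarith

lemma opNorm_le_of_halfNet {E F : Type*} [NormedAddCommGroup E] [NormedSpace ℝ E]
    [NormedAddCommGroup F] [NormedSpace ℝ F] {S : Finset E}
    (hS : ∀ x : E, ‖x‖ ≤ 1 → ∃ c ∈ S, ‖x - c‖ ≤ 1 / 2) (g : E →L[ℝ] F) {τ : ℝ} (hτ : 0 ≤ τ)
    (h : ∀ c ∈ S, ‖g c‖ ≤ τ) : ‖g‖ ≤ 2 * τ := by
  have : ‖g‖ ≤ τ + ‖g‖ / 2 := by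
    refine ContinuousLinearMap.opNorm_le_of_unit_norm (by positivity) fun x hx => ?_
    obtain ⟨c, hc, hxc⟩ := hS x hx.le
    calc ‖g x‖ = ‖g c + g (x - c)‖ := by rw [← map_add]; simp
      _ ≤ ‖g c‖ + ‖g (x - c)‖ := norm_add_le _ _
      _ ≤ τ + ‖g‖ * (1 / 2) := by
        gcongr
        · exact h c hc
        · exact (g.le_opNorm _).trans (by gcongr)
      _ = _ := by ring
  linarith

/-- The operator norm of a matrix acting on the Euclidean space `ℂ^ι`. -/
noncomputable def opN {ι : Type*} [Fintype ι] [DecidableEq ι] (A : Matrix ι ι ℂ) : ℝ :=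
  ‖Matrix.toEuclideanCLM (𝕜 := ℂ) A‖

section
variable {ι : Type*} [Fintype ι] [DecidableEq ι]

lemma opN_nonneg (A : Matrix ι ι ℂ) : 0 ≤ opN A := norm_nonneg _

lemma opN_smul (r : ℝ) (A : Matrix ι ι ℂ) : opN (r • A) = |r| * opN A := by
  have : r • A = (r : ℂ) • A := by ext; simp
  rw [opN, this, map_smul, norm_smul]; simp [opN]

lemma opN_le_of_halfNet {S : Finset (EuclideanSpace ℂ ι)}
    (hS : ∀ x : EuclideanSpace ℂ ι, ‖x‖ ≤ 1 → ∃ c ∈ S, ‖x - c‖ ≤ 1 / 2) (A : Matrix ι ι ℂ)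
    {τ : ℝ} (hτ : 0 ≤ τ)
    (h : ∀ u ∈ S, ∀ v ∈ S, |(inner ℂ (Matrix.toEuclideanCLM (𝕜 := ℂ) A v) u).re| ≤ τ) :
    opN A ≤ 4 * τ := by
  set T := Matrix.toEuclideanCLM (𝕜 := ℂ) A
  have h1 : ∀ v ∈ S, ‖T v‖ ≤ 2 * τ := by
    intro v hv
    set g : EuclideanSpace ℂ ι →L[ℝ] ℝ :=
      Complex.reCLM.comp ((innerSL ℂ (T v)).restrictScalars ℝ) with hg
    have hg' : ∀ u, g u = (inner ℂ (T v) u).re := fun u => rfl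
    have h2 : ‖g‖ ≤ 2 * τ := opNorm_le_of_halfNet hS g hτ fun u hu => by
      rw [hg', Real.norm_eq_abs]; exact h u hu v hv
    have h3 := (le_abs_self _).trans (g.le_opNorm (T v))
    have h4 : g (T v) = ‖T v‖ ^ 2 := by
      rw [hg', inner_self_eq_norm_sq_to_K]
      norm_cast
    rw [h4] at h3
    have h5 : ‖g‖ * ‖T v‖ ≤ 2 * τ * ‖T v‖ := by gcongr
    by_contra! hcon
    have : 0 < ‖T v‖ := hcon.trans_le' (by positivity)
    nlinarith
  have := opNorm_le_of_halfNet hS (T.restrictScalars ℝ) (by positivity : 0 ≤ 2 * τ) h1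
  rw [ContinuousLinearMap.norm_restrictScalars] at this
  exact this.trans_eq (by ring)

lemma opN_le_frobenius (A : Matrix ι ι ℂ) {r : ℝ} (hr : 0 ≤ r) (h : ∑ i, ∑ j, ‖A i j‖ ^ 2 ≤ r ^ 2) :
    opN A ≤ r := by
  refine ContinuousLinearMap.opNorm_le_bound _ hr fun v => ?_
  refine abs_le_of_sq_le_sq' ?_ (by positivity) |>.2
  rw [EuclideanSpace.norm_sq_eq, mul_pow, EuclideanSpace.norm_sq_eq]
  calc ∑ i, ‖(Matrix.toEuclideanCLM (𝕜 := ℂ) A v) i‖ ^ 2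
      ≤ ∑ i, (∑ j, ‖A i j‖ ^ 2) * ∑ j, ‖v j‖ ^ 2 := by
        gcongr with i
        have e : (Matrix.toEuclideanCLM (𝕜 := ℂ) A v) i = ∑ j, A i j * v j := by
          rw [Matrix.ofLp_toEuclideanCLM]; rfl
        rw [e]
        refine le_trans ?_ (Finset.sum_mul_sq_le_sq_mul_sq _ _ _)
        gcongr
        refine (norm_sum_le _ _).trans_eq ?_
        simp
    _ = (∑ i, ∑ j, ‖A i j‖ ^ 2) * ∑ j, ‖v j‖ ^ 2 := by rw [Finset.sum_mul]
    _ ≤ _ := by gcongr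

/-- Let `g` be a contraction into matrices with the Frobenius norm. Outside a set of small volume
in the unit ball, `g x` has operator norm at most `4 s ‖x‖`. Indeed each form
`x ↦ Re ⟪g x v, u⟫` with `u`, `v` in a `1/2`-net is linear of norm at most `1`, so
`volume_cap_le` applies to it, and there are at most `625 ^ card ι` such forms, each needed with
both signs. -/
lemma volume_bad_le {N : ℕ} (g : EuclideanSpace ℝ (Fin N) →ₗ[ℝ] Matrix ι ι ℂ)
    (hg : ∀ x, ∑ i, ∑ j, ‖g x i j‖ ^ 2 ≤ ‖x‖ ^ 2) {s : ℝ} (hs : 0 ≤ s) :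
    volume {x : EuclideanSpace ℝ (Fin N) | x ∈ ball 0 1 ∧ 4 * s * ‖x‖ < opN (g x)} ≤
      ENNReal.ofReal (2 * 625 ^ Fintype.card ι * Real.exp (-(3 / 8 * N * s ^ 2))) *
        volume (ball (0 : EuclideanSpace ℝ (Fin N)) 1) := by
  obtain ⟨S, hS1, hS2, hS3⟩ := exists_halfNet (EuclideanSpace ℂ ι)
  have hop : ∀ x, opN (g x) ≤ ‖x‖ := fun x => opN_le_frobenius _ (norm_nonneg _) (hg x)
  have riesz : ∀ u ∈ S, ∀ v ∈ S, ∃ p : EuclideanSpace ℝ (Fin N), ‖p‖ ≤ 1 ∧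
      ∀ x, (inner ℂ (Matrix.toEuclideanCLM (𝕜 := ℂ) (g x) v) u).re = ⟪p, x⟫ := by
    intro u hu v hv
    set L : EuclideanSpace ℝ (Fin N) →ₗ[ℝ] ℝ :=
      { toFun := fun x => (inner ℂ (Matrix.toEuclideanCLM (𝕜 := ℂ) (g x) v) u).re
        map_add' := fun x y => by simp
        map_smul' := fun r x => by
          have : r • g x = (r : ℂ) • g x := by ext; simp
          simp only [map_smul, this]
          simp } with hL
    have hLb : ∀ x, ‖L x‖ ≤ 1 * ‖x‖ := by
      intro x
      refine (Complex.abs_re_le_norm _).trans ((norm_inner_le_norm _ _).trans ?_)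
      have h1 := (Matrix.toEuclideanCLM (𝕜 := ℂ) (g x)).le_opNorm v
      have h2 := hop x
      have h3 := hS2 u hu
      have h4 := hS2 v hv
      calc _ ≤ (‖x‖ * 1) * 1 := by
            gcongr
            exact h1.trans (by gcongr; exact h2)
        _ = _ := by ring
    set L' := L.mkContinuous 1 hLb
    refine ⟨(InnerProductSpace.toDual ℝ _).symm L', ?_, fun x => ?_⟩
    · rw [LinearIsometryEquiv.norm_map]
      exact L.mkContinuous_norm_le zero_le_one hLb
    · rw [InnerProductSpace.toDual_symm_apply]; rfl
  choose! p hp1 hp2 using riesz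
  have hsub : {x : EuclideanSpace ℝ (Fin N) | x ∈ ball 0 1 ∧ 4 * s * ‖x‖ < opN (g x)} ⊆
      ⋃ u ∈ S, ⋃ v ∈ S, ({x | x ∈ ball 0 1 ∧ s * ‖x‖ < ⟪p u v, x⟫} ∪
        {x | x ∈ ball 0 1 ∧ s * ‖x‖ < ⟪-p u v, x⟫}) := by
    rintro x ⟨hx, hx'⟩
    by_contra hcon
    simp only [mem_iUnion, not_exists, mem_union, mem_ofPred_eq, not_or, not_and, not_lt,
      inner_neg_left] at hcon
    refine absurd (opN_le_of_halfNet hS3 (g x) (τ := s * ‖x‖) (by positivity) ?_) (by linarith)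
    intro u hu v hv
    rw [hp2 u hu v hv]
    have := hcon u hu v hv
    exact abs_le.2 ⟨by linarith [this.2 hx], this.1 hx⟩
  set V := volume (ball (0 : EuclideanSpace ℝ (Fin N)) 1)
  set c := ENNReal.ofReal (Real.exp (-(3 / 8 * N * s ^ 2))) * V with hc
  have hcard : (S.card : ℝ≥0∞) * S.card ≤ ENNReal.ofReal (625 ^ Fintype.card ι) := by
    have h1 : S.card ≤ 25 ^ Fintype.card ι := by
      refine hS1.trans_eq ?_
      rw [finrank_real_of_complex, finrank_euclideanSpace, pow_mul]; norm_num
    have h2 : S.card * S.card ≤ 625 ^ Fintype.card ι := by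
      refine (Nat.mul_le_mul h1 h1).trans_eq ?_
      rw [← mul_pow]; norm_num
    have h3 : ENNReal.ofReal (625 ^ Fintype.card ι) = ((625 ^ Fintype.card ι : ℕ) : ℝ≥0∞) := by
      rw [← ENNReal.ofReal_natCast]; push_cast; rfl
    rw [h3]
    exact_mod_cast h2
  calc _ ≤ _ := measure_mono hsub
    _ ≤ ∑ u ∈ S, ∑ v ∈ S, (c + c) := by
        refine (measure_biUnion_finset_le _ _).trans (Finset.sum_le_sum fun u hu => ?_)
        refine (measure_biUnion_finset_le _ _).trans (Finset.sum_le_sum fun v hv => ?_)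
        refine (measure_union_le _ _).trans (add_le_add ?_ ?_)
        · exact volume_cap_le (hp1 u hu v hv) hs
        · exact volume_cap_le (by rw [norm_neg]; exact hp1 u hu v hv) hs
    _ = (S.card * S.card) * (2 * c) := by
        rw [Finset.sum_const, Finset.sum_const, nsmul_eq_mul, nsmul_eq_mul, two_mul, mul_assoc]
    _ ≤ ENNReal.ofReal (625 ^ Fintype.card ι) * (2 * c) := by gcongr
    _ = _ := by
        rw [hc, ENNReal.ofReal_mul (by positivity), ENNReal.ofReal_mul (by norm_num)]
        simp only [ENNReal.ofReal_ofNat]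
        ring

lemma continuous_opN_comp {N : ℕ} (g : EuclideanSpace ℝ (Fin N) →ₗ[ℝ] Matrix ι ι ℂ) :
    Continuous fun x => opN (g x) := by
  have h1 : Continuous g := by
    refine continuous_matrix fun i j => ?_
    exact LinearMap.continuous_of_finiteDimensional
      ((Matrix.entryLinearMap ℝ ℂ i j).comp g)
  have h2 : Continuous fun A : Matrix ι ι ℂ => Matrix.toEuclideanCLM (𝕜 := ℂ) A :=
    LinearMap.continuous_of_finiteDimensional
      ((Matrix.toEuclideanCLM (𝕜 := ℂ) (n := ι)).toAlgEquiv.toLinearMap)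
  exact (h2.comp h1).norm

/-- The version of `volume_bad_le` for the uniform measure on the sphere. -/
lemma sphereUniform_bad_le {N : ℕ} (hN : 0 < N) (g : EuclideanSpace ℝ (Fin N) →ₗ[ℝ] Matrix ι ι ℂ)
    (hg : ∀ x, ∑ i, ∑ j, ‖g x i j‖ ^ 2 ≤ ‖x‖ ^ 2) {s : ℝ} (hs : 0 ≤ s) :
    sphereUniform N {u : sphere (0 : EuclideanSpace ℝ (Fin N)) 1 | 4 * s < opN (g u)} ≤
      ENNReal.ofReal (2 * 625 ^ Fintype.card ι * Real.exp (-(3 / 8 * N * s ^ 2))) := by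
  have hb0 : volume (ball (0 : EuclideanSpace ℝ (Fin N)) 1) ≠ 0 :=
    (measure_ball_pos _ _ one_pos).ne'
  have hbt : volume (ball (0 : EuclideanSpace ℝ (Fin N)) 1) ≠ ⊤ := measure_ball_lt_top.ne
  have hN0 : (N : ℝ≥0∞) ≠ 0 := by exact_mod_cast hN.ne'
  have hm : MeasurableSet {u : sphere (0 : EuclideanSpace ℝ (Fin N)) 1 | 4 * s < opN (g u)} :=
    (isOpen_lt continuous_const ((continuous_opN_comp g).comp continuous_subtype_val)).measurableSet
  have hvol := volume_bad_le g hg hs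
  rw [sphereUniform, Measure.smul_apply, Measure.toSphere_apply' _ hm,
    Measure.toSphere_apply_univ, finrank_euclideanSpace, Fintype.card_fin, smul_eq_mul,
    mul_comm, ← div_eq_mul_inv]
  refine ENNReal.div_le_of_le_mul ?_
  rw [mul_left_comm]
  gcongr
  refine le_trans (measure_mono ?_) hvol
  rintro _ ⟨r, hr, _, ⟨u, hu, rfl⟩, rfl⟩
  have hu1 : ‖(u : EuclideanSpace ℝ (Fin N))‖ = 1 := by simp
  have hr0 : 0 < r := hr.1
  refine ⟨?_, ?_⟩
  · simp [norm_smul, hu1, abs_of_pos hr0, hr.2]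
  · simp only [norm_smul, hu1, map_smul, opN_smul, Real.norm_eq_abs, abs_of_pos hr0]
    have : 4 * s < opN (g u) := hu
    nlinarith
end

/-! ### Operator norm and positivity -/

section
variable {ι : Type*} [Fintype ι] [DecidableEq ι]

lemma norm_dotProduct_mulVec_le (A : Matrix ι ι ℂ) (x : ι → ℂ) :
    ‖star x ⬝ᵥ A.mulVec x‖ ≤ opN A * (star x ⬝ᵥ x).re := by
  set v : EuclideanSpace ℂ ι := WithLp.toLp 2 x
  have h1 : star x ⬝ᵥ A.mulVec x = inner ℂ v (Matrix.toEuclideanCLM (𝕜 := ℂ) A v) := by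
    rw [EuclideanSpace.inner_eq_star_dotProduct, Matrix.ofLp_toEuclideanCLM, dotProduct_comm]
  have h2 : (star x ⬝ᵥ x).re = ‖v‖ ^ 2 := by
    rw [EuclideanSpace.norm_sq_eq, dotProduct, Complex.re_sum]
    refine Finset.sum_congr rfl fun i _ => ?_
    rw [Pi.star_apply, Complex.star_def, ← Complex.normSq_eq_conj_mul_self, Complex.ofReal_re,
      Complex.normSq_eq_norm_sq]
  rw [h1, h2]
  refine (norm_inner_le_norm _ _).trans ?_
  have := (Matrix.toEuclideanCLM (𝕜 := ℂ) A).le_opNorm v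
  calc _ ≤ ‖v‖ * (opN A * ‖v‖) := by gcongr; exact this
    _ = _ := by ring

/-- A Hermitian perturbation of operator norm at most `c` keeps `c • 1` positive semidefinite. -/
lemma posSemidef_smul_one_add {A : Matrix ι ι ℂ} (hA : A.IsHermitian) {c : ℝ} (hc : opN A ≤ c) :
    ((c : ℂ) • (1 : Matrix ι ι ℂ) + A).PosSemidef := by
  have hH : ((c : ℂ) • (1 : Matrix ι ι ℂ) + A).IsHermitian := by
    refine Matrix.IsHermitian.add ?_ hA
    rw [Matrix.IsHermitian, Matrix.conjTranspose_smul]; simp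
  refine .of_dotProduct_mulVec_nonneg hH fun x => ?_
  have him := hH.im_star_dotProduct_mulVec_self x
  have hx : 0 ≤ (star x ⬝ᵥ x).re := (Complex.nonneg_iff.1 (dotProduct_star_self_nonneg x)).1
  refine Complex.nonneg_iff.2 ⟨?_, him.symm⟩
  have h1 := norm_dotProduct_mulVec_le A x
  have h2 := (abs_le.1 ((Complex.abs_re_le_norm _).trans h1)).1
  rw [Matrix.add_mulVec, Matrix.smul_mulVec, Matrix.one_mulVec, dotProduct_add, dotProduct_smul,
    Complex.add_re, smul_eq_mul, Complex.re_ofReal_mul]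
  nlinarith

lemma opN_neg (A : Matrix ι ι ℂ) : opN (-A) = opN A := by
  rw [opN, map_neg, norm_neg, opN]

open scoped MatrixOrder in
/-- The state `M = Bᴴ B` is averaged against `opN X • 1 - X`, which is positive semidefinite. -/
lemma re_trace_mul_le {X M : Matrix ι ι ℂ} (hX : X.IsHermitian) (hM : M.PosSemidef)
    (ht : M.trace = 1) : (X * M).trace.re ≤ opN X := by
  obtain ⟨B, rfl⟩ := CStarAlgebra.nonneg_iff_eq_star_mul_self.1 hM.nonneg
  rw [Matrix.star_eq_conjTranspose] at ht ⊢
  have h := posSemidef_smul_one_add hX.neg (opN_neg X).le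
  have h2 := (Complex.nonneg_iff.1 (h.mul_mul_conjTranspose_same B).trace_nonneg).1
  rw [Matrix.mul_add, Matrix.add_mul, Matrix.trace_add, Matrix.mul_smul, Matrix.smul_mul,
    Matrix.trace_smul, Matrix.mul_one, Matrix.trace_mul_comm B, ht, Matrix.mul_assoc,
    Matrix.trace_mul_comm B, Matrix.mul_assoc] at h2
  simp at h2
  exact h2

end

/-! ### Partial transposition and the centred body of fully PPT states -/

section
variable {k d : ℕ}

/-- Partial transposition as a real-linear map. -/
def ptransL (b : Finset (Fin k)) : MOp k d →ₗ[ℝ] MOp k d where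
  toFun := ptrans b
  map_add' _ _ := rfl
  map_smul' _ _ := rfl

lemma ptrans_empty (M : MOp k d) : ptrans ∅ M = M := by
  ext x y; simp [ptrans]

lemma ptrans_smul_one (b : Finset (Fin k)) (c : ℂ) : ptrans b (c • (1 : MOp k d)) = c • 1 := by
  ext x y
  have : ((fun j => if j ∈ b then y j else x j) = fun j => if j ∈ b then x j else y j) ↔ x = y := by
    constructor
    · intro h
      ext j
      have := congrFun h j
      by_cases hj : j ∈ b <;> simp_all
    · rintro rfl; rfl
  simp [ptrans, Matrix.one_apply, this]

lemma isHermitian_ptrans (b : Finset (Fin k)) {M : MOp k d} (hM : M.IsHermitian) :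
    (ptrans b M).IsHermitian := by
  ext x y
  exact hM.apply _ _

/-- Partial transposition permutes the matrix entries, so it is a Frobenius isometry. -/
lemma sum_norm_sq_ptrans (b : Finset (Fin k)) (M : MOp k d) :
    ∑ x, ∑ y, ‖ptrans b M x y‖ ^ 2 = ∑ x, ∑ y, ‖M x y‖ ^ 2 := by
  -- Swapping the coordinates in `b` is an involution on pairs of multi-indices.
  let τ : MIdx k d × MIdx k d → MIdx k d × MIdx k d := fun p =>
    (fun j => if j ∈ b then p.2 j else p.1 j, fun j => if j ∈ b then p.1 j else p.2 j)
  have hτ : Function.Involutive τ := by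
    rintro ⟨x, y⟩
    ext j <;> by_cases hj : j ∈ b <;> simp [τ, hj]
  rw [← Fintype.sum_prod_type', ← Fintype.sum_prod_type']
  exact Equiv.sum_comp hτ.toPerm fun p => ‖M p.1 p.2‖ ^ 2

variable {N : ℕ} {f : EuclideanSpace ℝ (Fin N) →ₗ[ℝ] MOp k d}

lemma sum_norm_sq_param (hf : IsHermParam f) (x : EuclideanSpace ℝ (Fin N)) :
    ∑ i, ∑ j, ‖f x i j‖ ^ 2 = ‖x‖ ^ 2 := by
  rw [← real_inner_self_eq_norm_sq, ← hf.inner_eq, Matrix.trace, Complex.re_sum]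
  refine Finset.sum_congr rfl fun i _ => ?_
  rw [Matrix.diag_apply, Matrix.mul_apply, Complex.re_sum]
  refine Finset.sum_congr rfl fun j _ => ?_
  rw [← (hf.herm x).apply j i, Complex.star_def, Complex.mul_conj, Complex.ofReal_re,
    Complex.normSq_eq_norm_sq]

lemma sum_norm_sq_ptransL_param (hf : IsHermParam f) (b : Finset (Fin k))
    (x : EuclideanSpace ℝ (Fin N)) :
    ∑ i, ∑ j, ‖(ptransL b ∘ₗ f) x i j‖ ^ 2 ≤ ‖x‖ ^ 2 :=
  ((sum_norm_sq_ptrans b (f x)).trans (sum_norm_sq_param hf x)).le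

lemma opN_param_le (hf : IsHermParam f) (x : EuclideanSpace ℝ (Fin N)) : opN (f x) ≤ ‖x‖ :=
  opN_le_frobenius _ (norm_nonneg _) (sum_norm_sq_param hf x).le

/-- The fully PPT states in the coordinates `f`, with the maximally mixed state as origin. -/
def pptBody (f : EuclideanSpace ℝ (Fin N) →ₗ[ℝ] MOp k d) : Set (EuclideanSpace ℝ (Fin N)) :=
  f ⁻¹' ((fun A => A - maxMixed (MIdx k d)) '' FullyPPT k d)

lemma mem_pptBody {x : EuclideanSpace ℝ (Fin N)} :
    x ∈ pptBody f ↔ f x + maxMixed (MIdx k d) ∈ FullyPPT k d := by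
  constructor
  · rintro ⟨A, hA, hx⟩
    rw [← hx]; simpa using hA
  · intro h
    exact ⟨_, h, by simp⟩

lemma trace_maxMixed (hd : 0 < d) : (maxMixed (MIdx k d)).trace = 1 := by
  have : (Fintype.card (MIdx k d) : ℂ) ≠ 0 := by
    simp [hd.ne']
  rw [maxMixed, Matrix.trace_smul, Matrix.trace_one, smul_eq_mul, inv_mul_cancel₀ this]

/-- If every partial transpose of `f x` (including `f x` itself, for `b = ∅`) has operator norm at
most `1 / d ^ k`, then `f x + 1 / d ^ k` is fully PPT. -/
lemma mem_pptBody_of_opN_le (hf : IsHermParam f) (hd : 0 < d) {x : EuclideanSpace ℝ (Fin N)}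
    (h : ∀ b, opN (ptrans b (f x)) ≤ ((d : ℝ) ^ k)⁻¹) : x ∈ pptBody f := by
  have key : ∀ b, (ptrans b (f x + maxMixed (MIdx k d))).PosSemidef := by
    intro b
    have h1 : ptrans b (f x + maxMixed (MIdx k d)) =
        ((((d : ℝ) ^ k)⁻¹ : ℝ) : ℂ) • (1 : MOp k d) + ptrans b (f x) := by
      have h2 : ptrans b (f x + maxMixed (MIdx k d)) =
        ptrans b (f x) + ptrans b (maxMixed (MIdx k d)) := rfl
      rw [h2, maxMixed, ptrans_smul_one, add_comm]
      simp
    rw [h1]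
    exact posSemidef_smul_one_add (isHermitian_ptrans b (hf.herm x)) (h b)
  refine mem_pptBody.2 ⟨⟨?_, ?_⟩, fun b _ => key b⟩
  · have := key ∅
    rwa [ptrans_empty] at this
  · rw [Matrix.trace_add, hf.traceless, trace_maxMixed hd, zero_add]

lemma zero_mem_pptBody (hf : IsHermParam f) (hd : 0 < d) : (0 : EuclideanSpace ℝ (Fin N)) ∈ pptBody f := by
  refine mem_pptBody_of_opN_le hf hd fun b => ?_
  have : ptrans b (f 0) = 0 := by rw [map_zero]; rfl
  rw [this, opN, map_zero, norm_zero]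
  positivity

lemma trace_param_mul_maxMixed (hf : IsHermParam f) (x : EuclideanSpace ℝ (Fin N)) :
    (f x * maxMixed (MIdx k d)).trace = 0 := by
  rw [maxMixed, Matrix.mul_smul, Matrix.mul_one, Matrix.trace_smul, hf.traceless, smul_zero]

lemma inner_eq_re_trace (hf : IsHermParam f) (x y : EuclideanSpace ℝ (Fin N)) :
    ⟪x, y⟫ = (f x * (f y + maxMixed (MIdx k d))).trace.re := by
  rw [Matrix.mul_add, Matrix.trace_add, trace_param_mul_maxMixed hf, add_zero, hf.inner_eq]

/-- The support function of the body is at most the operator norm. -/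
lemma inner_le_opN (hf : IsHermParam f) (x : EuclideanSpace ℝ (Fin N))
    {y : EuclideanSpace ℝ (Fin N)} (hy : y ∈ pptBody f) : ⟪x, y⟫ ≤ opN (f x) := by
  rw [inner_eq_re_trace hf]
  have := (mem_pptBody.1 hy).1
  exact re_trace_mul_le (hf.herm x) this.1 this.2

/-- From `inner_le_opN` at `x = y`, since the operator norm is at most the Hilbert–Schmidt norm. -/
lemma norm_le_one_of_mem_pptBody (hf : IsHermParam f) :
    ∀ y ∈ pptBody f, ‖y‖ ≤ 1 := by
  intro y hy
  have h := (inner_le_opN hf y hy).trans (opN_param_le hf y)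
  rw [real_inner_self_eq_norm_sq] at h
  by_contra! hc
  nlinarith

/-- The quantity integrated in `matMeanWidth` is the support function of the centred body, since
traceless matrices are orthogonal to the maximally mixed state. -/
lemma sSup_trace_eq_suppFun (hf : IsHermParam f) (hd : 0 < d) (x : EuclideanSpace ℝ (Fin N)) :
    sSup ((fun M => ((f x * M).trace).re) '' FullyPPT k d) = suppFun (pptBody f) x := by
  rw [suppFun]
  congr 1
  ext r
  constructor
  · rintro ⟨M, hM, rfl⟩
    obtain ⟨y, hy⟩ := hf.surj (M - maxMixed (MIdx k d))
      (hM.1.1.1.sub (by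
        rw [maxMixed, Matrix.IsHermitian, Matrix.conjTranspose_smul]; simp))
      (by rw [Matrix.trace_sub, hM.1.2, trace_maxMixed hd, sub_self])
    refine ⟨y, ⟨M, hM, hy.symm⟩, ?_⟩
    dsimp only
    rw [inner_eq_re_trace hf, hy, sub_add_cancel]
  · rintro ⟨y, hy, rfl⟩
    exact ⟨_, mem_pptBody.1 hy, (inner_eq_re_trace hf x y).symm⟩

lemma isClosed_posSemidef : IsClosed {M : MOp k d | M.PosSemidef} := by
  have : {M : MOp k d | M.PosSemidef} = {M | M.conjTranspose = M} ∩
      ⋂ x : MIdx k d → ℂ, {M | 0 ≤ star x ⬝ᵥ M.mulVec x} := by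
    ext M
    simp only [mem_ofPred_eq, mem_inter_iff, mem_iInter]
    exact Matrix.posSemidef_iff_dotProduct_mulVec
  rw [this]
  refine (isClosed_eq (by fun_prop) (by fun_prop)).inter (isClosed_iInter fun x => ?_)
  exact isClosed_le (by fun_prop) (by fun_prop)

lemma continuous_param (f : EuclideanSpace ℝ (Fin N) →ₗ[ℝ] MOp k d) : Continuous f :=
  LinearMap.continuous_of_finiteDimensional f

lemma measurableSet_pptBody (f : EuclideanSpace ℝ (Fin N) →ₗ[ℝ] MOp k d) :
    MeasurableSet (pptBody f) := by
  have hc : Continuous fun x => f x + maxMixed (MIdx k d) := (continuous_param f).add_const _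
  have hp : ∀ b : Finset (Fin k), Continuous (ptrans b : MOp k d → MOp k d) := fun b =>
    LinearMap.continuous_of_finiteDimensional (ptransL b)
  have : IsClosed (pptBody f) := by
    have e : pptBody f = (fun x => f x + maxMixed (MIdx k d)) ⁻¹'
        (({M | M.PosSemidef} ∩ {M | M.trace = 1}) ∩
          ⋂ b ∈ bipartitions k, ptrans b ⁻¹' {M | M.PosSemidef}) := by
      ext x
      simp only [mem_pptBody, FullyPPT, IsState, mem_preimage, mem_inter_iff, mem_iInter,
        mem_ofPred_eq]
    rw [e]
    refine IsClosed.preimage hc (IsClosed.inter (isClosed_posSemidef.inter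
      (isClosed_eq (by fun_prop) (by fun_prop))) (isClosed_biInter fun b _ => ?_))
    exact isClosed_posSemidef.preimage (hp b)
  exact this.measurableSet

end

/-! ### Volume radius and mean width -/

/-- The exceptional probability of `volume_bad_le` for `n × n` matrices at `s = 32 / √n`. -/
lemma deviation_bound {n : ℕ} (hn : 4 ≤ n) :
    2 * 625 ^ n * Real.exp (-(3 / 8 * ((n ^ 2 - 1 : ℕ) : ℝ) * (32 / √(n : ℝ)) ^ 2)) ≤
      1 / (2 * n) := by
  have hn' : (4 : ℝ) ≤ n := by exact_mod_cast hn
  have hN : ((n ^ 2 - 1 : ℕ) : ℝ) = (n : ℝ) ^ 2 - 1 := by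
    rw [Nat.cast_sub (Nat.one_le_pow _ _ (by omega))]; push_cast; ring
  have h1 : 360 * (n : ℝ) ≤ 3 / 8 * ((n ^ 2 - 1 : ℕ) : ℝ) * (32 / √(n : ℝ)) ^ 2 := by
    rw [hN, div_pow, Real.sq_sqrt (by positivity), ← mul_div_assoc, le_div_iff₀ (by positivity)]
    nlinarith
  have h2 : (625 : ℝ) ≤ Real.exp 10 := by
    have h := Real.add_one_le_exp (1 : ℝ)
    have e : Real.exp 10 = Real.exp 1 ^ 10 := by rw [← Real.exp_nat_mul]; norm_num
    rw [e]
    calc (625 : ℝ) ≤ (1 + 1) ^ 10 := by norm_num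
      _ ≤ _ := by gcongr
  have h3 : (625 : ℝ) ^ n ≤ Real.exp (n * 10) := by
    rw [Real.exp_nat_mul]; gcongr
  have h4 : 4 * (n : ℝ) ≤ Real.exp (350 * n) := by
    have := Real.add_one_le_exp (350 * (n : ℝ)); linarith
  calc _ ≤ 2 * Real.exp (n * 10) * Real.exp (-(360 * n)) := by gcongr
    _ = 2 * (Real.exp (350 * n))⁻¹ := by
      rw [mul_assoc, ← Real.exp_add, ← Real.exp_neg]; congr 2; ring
    _ ≤ 2 * (4 * (n : ℝ))⁻¹ := by gcongr
    _ = _ := by field_simp; norm_num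

section
variable {k d n N : ℕ} {f : EuclideanSpace ℝ (Fin N) →ₗ[ℝ] MOp k d}

lemma four_le_pow (hk : 2 ≤ k) (hd : 2 ≤ d) : 4 ≤ d ^ k :=
  calc 4 = 2 ^ 2 := by norm_num
    _ ≤ d ^ 2 := Nat.pow_le_pow_left hd 2
    _ ≤ d ^ k := Nat.pow_le_pow_right (by omega) hk

lemma dim_pos (hk : 2 ≤ k) (hd : 2 ≤ d) : 0 < (d ^ k) ^ 2 - 1 := by
  have := Nat.pow_le_pow_left (four_le_pow hk hd) 2
  omega

lemma rpow_half (k d : ℕ) : (d : ℝ) ^ ((k : ℝ) / 2) = √((d ^ k : ℕ) : ℝ) := by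
  rw [Real.sqrt_eq_rpow, Nat.cast_pow, ← Real.rpow_natCast, ← Real.rpow_mul (by positivity)]
  congr 1; ring

/-- At least half of the ball of radius `1 / (128 √n)`, where `n = d ^ k`, lies in the body:
outside a small exceptional set, each partial transpose of `f x` has operator norm at most
`(128 / √n) ‖x‖`. -/
lemma half_volume_le (hf : IsHermParam f) (hn : n = d ^ k) (hN : N = n ^ 2 - 1) (hk : 2 ≤ k) (hd : 2 ≤ d) :
    (1 / 128 / √(n : ℝ)) ^ N / 2 ≤ (volume (pptBody f)).toReal /
      (volume (ball (0 : EuclideanSpace ℝ (Fin N)) 1)).toReal := by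
  have hn4 : 4 ≤ n := hn ▸ four_le_pow hk hd
  have hn4' : (4 : ℝ) ≤ n := by exact_mod_cast hn4
  set r : ℝ := 1 / 128 / √(n : ℝ) with hr
  set s : ℝ := 32 / √(n : ℝ) with hs
  have hr0 : 0 < r := by positivity
  have hs0 : 0 ≤ s := by positivity
  have hrs : r * (4 * s) = (n : ℝ)⁻¹ := by
    have : √(n : ℝ) * √(n : ℝ) = n := Real.mul_self_sqrt (by positivity)
    rw [hr, hs, show 1 / 128 / √(n : ℝ) * (4 * (32 / √(n : ℝ))) = (√(n : ℝ) * √(n : ℝ))⁻¹ by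
      field_simp; norm_num, this]
  set V := volume (ball (0 : EuclideanSpace ℝ (Fin N)) 1) with hV
  have hV0 : V ≠ 0 := (measure_ball_pos _ _ one_pos).ne'
  have hVt : V ≠ ⊤ := measure_ball_lt_top.ne
  set bad : Finset (Fin k) → Set (EuclideanSpace ℝ (Fin N)) := fun b =>
    {x | x ∈ ball 0 1 ∧ 4 * s * ‖x‖ < opN ((ptransL b ∘ₗ f) x)} with hbad
  have hcover : ball (0 : EuclideanSpace ℝ (Fin N)) 1 ⊆
      ((r • ·) ⁻¹' pptBody f) ∪ ⋃ b ∈ (Finset.univ : Finset (Finset (Fin k))), bad b := by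
    intro x hx
    by_cases hxb : ∃ b, x ∈ bad b
    · obtain ⟨b, hb⟩ := hxb
      exact Or.inr (mem_biUnion (Finset.mem_coe.2 (Finset.mem_univ b)) hb)
    · refine Or.inl (mem_pptBody_of_opN_le hf (by omega) fun b => ?_)
      have h1 : opN ((ptransL b ∘ₗ f) x) ≤ 4 * s * ‖x‖ := by
        by_contra! hcon
        exact hxb ⟨b, hx, hcon⟩
      have h2 : ptrans b (f (r • x)) = r • (ptransL b ∘ₗ f) x := by
        rw [map_smul]; rfl
      have hx1 : ‖x‖ ≤ 1 := by simpa using (mem_ball_zero_iff.1 hx).le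
      rw [h2, opN_smul, abs_of_pos hr0]
      calc r * opN ((ptransL b ∘ₗ f) x) ≤ r * (4 * s * 1) := by
            gcongr; exact h1.trans (by gcongr)
        _ = (n : ℝ)⁻¹ := by rw [mul_one, hrs]
        _ = _ := by rw [hn]; push_cast; rfl
  have hbadvol : ∀ b, volume (bad b) ≤ ENNReal.ofReal (1 / (2 * n)) * V := by
    intro b
    refine (volume_bad_le (ptransL b ∘ₗ f) (sum_norm_sq_ptransL_param hf b) hs0).trans ?_
    have hcard : Fintype.card (MIdx k d) = n := by simp [hn]
    rw [hcard]
    gcongr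
    rw [hN]
    exact deviation_bound hn4
  have h2k : (2 : ℝ) ^ k ≤ n := by
    rw [hn]; push_cast; gcongr; exact_mod_cast hd
  have hsum : volume (⋃ b ∈ (Finset.univ : Finset (Finset (Fin k))), bad b) ≤
      ENNReal.ofReal (1 / 2) * V := by
    calc _ ≤ ∑ b : Finset (Fin k), volume (bad b) := measure_biUnion_finset_le _ _
      _ ≤ ∑ b : Finset (Fin k), ENNReal.ofReal (1 / (2 * n)) * V :=
        Finset.sum_le_sum fun b _ => hbadvol b
      _ = ENNReal.ofReal (2 ^ k * (1 / (2 * n))) * V := by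
        rw [Finset.sum_const, Finset.card_univ, Fintype.card_finset, Fintype.card_fin, nsmul_eq_mul,
          ENNReal.ofReal_mul (by positivity), mul_assoc]
        congr 1
        rw [← ENNReal.ofReal_natCast]; push_cast; rfl
      _ ≤ _ := by
        gcongr
        rw [mul_one_div, div_le_div_iff₀ (by positivity) (by norm_num)]
        linarith
  have hKt : volume (pptBody f) ≠ ⊤ := by
    refine (measure_mono (t := closedBall 0 1) fun y hy => ?_).trans_lt
      measure_closedBall_lt_top |>.ne
    simpa using norm_le_one_of_mem_pptBody hf y hy
  have htot : V ≤ ENNReal.ofReal ((r ^ N)⁻¹) * volume (pptBody f) + ENNReal.ofReal (1 / 2) * V := by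
    refine ((measure_mono hcover).trans (measure_union_le _ _)).trans (add_le_add ?_ hsum)
    rw [Measure.addHaar_preimage_smul _ hr0.ne', finrank_euclideanSpace, Fintype.card_fin,
      abs_of_pos (by positivity)]
  have hreal := ENNReal.toReal_mono (by finiteness) htot
  rw [ENNReal.toReal_add (by finiteness) (by finiteness), ENNReal.toReal_mul, ENNReal.toReal_mul,
    ENNReal.toReal_ofReal (by positivity), ENNReal.toReal_ofReal (by positivity)] at hreal
  have hVr : 0 < V.toReal := ENNReal.toReal_pos hV0 hVt
  have hrN : 0 < r ^ N := by positivity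
  rw [div_le_div_iff₀ (by norm_num) hVr]
  have : V.toReal / 2 ≤ (r ^ N)⁻¹ * (volume (pptBody f)).toReal := by linarith
  rw [inv_mul_eq_div, le_div_iff₀ hrN] at this
  linarith

/-- `half_volume_le` after taking the `N`-th root, the factor `2 ^ (-1 / N)` being at least
`1 / 2`. -/
lemma volRad_lower (hf : IsHermParam f) (hn : n = d ^ k) (hN : N = n ^ 2 - 1) (hk : 2 ≤ k) (hd : 2 ≤ d) :
    1 / 256 / √(n : ℝ) ≤ matVolRad f (FullyPPT k d) := by
  have h := half_volume_le hf hn hN hk hd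
  have hN0 : 0 < N := by rw [hN, hn]; exact dim_pos hk hd
  set r : ℝ := 1 / 128 / √(n : ℝ) with hr
  have hr0 : 0 ≤ r := by positivity
  have h2 : (r / 2) ^ N ≤ r ^ N / 2 := by
    rw [div_pow]
    have : (2 : ℝ) ≤ 2 ^ N := le_self_pow₀ one_le_two hN0.ne'
    gcongr
  calc 1 / 256 / √(n : ℝ) = r / 2 := by rw [hr]; ring
    _ = ((r / 2) ^ N) ^ ((N : ℝ)⁻¹) := (Real.pow_rpow_inv_natCast (by positivity) hN0.ne').symm
    _ ≤ _ := Real.rpow_le_rpow (by positivity) (h2.trans h) (by positivity)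

lemma meanWidth_eq (hf : IsHermParam f) (hd : 2 ≤ d) :
    matMeanWidth f (FullyPPT k d) =
      ∫ u : sphere (0 : EuclideanSpace ℝ (Fin N)) 1, suppFun (pptBody f) u
        ∂(sphereUniform N) :=
  integral_congr_ae (.of_forall fun u => sSup_trace_eq_suppFun hf (by omega) u)

lemma volRad_le_meanWidth (hf : IsHermParam f) (hn : n = d ^ k) (hN : N = n ^ 2 - 1) (hk : 2 ≤ k) (hd : 2 ≤ d) :
    matVolRad f (FullyPPT k d) ≤ matMeanWidth f (FullyPPT k d) := by
  rw [meanWidth_eq hf hd]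
  exact urysohn (by rw [hN, hn]; exact dim_pos hk hd) (measurableSet_pptBody f) (norm_le_one_of_mem_pptBody hf)
    (zero_mem_pptBody hf (by omega))

/-- Upper bound of the right order: off an exceptional set of directions the support function is
at most the operator norm `128 / √n`, and it is at most `1` everywhere. -/
lemma meanWidth_upper (hf : IsHermParam f) (hn : n = d ^ k) (hN : N = n ^ 2 - 1) (hk : 2 ≤ k) (hd : 2 ≤ d) :
    matMeanWidth f (FullyPPT k d) ≤ 129 / √(n : ℝ) := by
  rw [meanWidth_eq hf hd]
  have hN0 : 0 < N := by rw [hN, hn]; exact dim_pos hk hd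
  have hn4 : 4 ≤ n := hn ▸ four_le_pow hk hd
  have hbad := fun s hs => sphereUniform_bad_le hN0 f (fun x => (sum_norm_sq_param hf x).le) (s := s) hs
  have hcard : Fintype.card (MIdx k d) = n := by simp [hn]
  rw [hcard] at hbad
  have hn4' : (4 : ℝ) ≤ n := by exact_mod_cast hn4
  have := isProbabilityMeasure_sphereUniform hN0
  set s : ℝ := 32 / √(n : ℝ) with hs
  have hs0 : 0 ≤ s := by positivity
  set B := {u : sphere (0 : EuclideanSpace ℝ (Fin N)) 1 | 4 * s < opN (f u)} with hB
  have hBm : MeasurableSet B :=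
    (isOpen_lt continuous_const ((continuous_opN_comp f).comp continuous_subtype_val)).measurableSet
  have hBv : (sphereUniform N).real B ≤ 1 / (2 * n) := by
    refine ENNReal.toReal_le_of_le_ofReal (by positivity) ((hbad s hs0).trans ?_)
    gcongr
    rw [hN]
    exact deviation_bound hn4
  have h0 := zero_mem_pptBody hf (show 0 < d by omega)
  have hop : ∀ u : sphere (0 : EuclideanSpace ℝ (Fin N)) 1, suppFun (pptBody f) u ≤ opN (f u) := by
    intro u
    refine csSup_le ⟨_, 0, h0, rfl⟩ ?_
    rintro _ ⟨y, hy, rfl⟩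
    exact inner_le_opN hf _ hy
  have hone : ∀ u : sphere (0 : EuclideanSpace ℝ (Fin N)) 1, opN (f u) ≤ 1 := by
    intro u
    refine (opN_param_le hf _).trans_eq ?_
    simp
  have hcont := continuous_suppFun (norm_le_one_of_mem_pptBody hf) h0
  have hint : Integrable (fun u : sphere (0 : EuclideanSpace ℝ (Fin N)) 1 => suppFun (pptBody f) u)
      (sphereUniform N) := by
    refine Integrable.of_bound (C := 1) (hcont.comp continuous_subtype_val).aestronglyMeasurable
      (.of_forall fun u => ?_)
    rw [Real.norm_eq_abs, abs_of_nonneg (suppFun_nonneg (norm_le_one_of_mem_pptBody hf) h0 _)]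
    exact (hop u).trans (hone u)
  have hind : Integrable (B.indicator (1 : sphere (0 : EuclideanSpace ℝ (Fin N)) 1 → ℝ)) (sphereUniform N) :=
    (integrable_const (1 : ℝ)).indicator hBm
  calc _ ≤ ∫ u, (4 * s + B.indicator 1 u) ∂(sphereUniform N) := by
        refine integral_mono hint
          ((integrable_const _).add hind) fun u => ?_
        by_cases hu : u ∈ B
        · simp only [indicator_of_mem hu, Pi.one_apply]
          linarith [hop u, hone u]
        · simp only [indicator_of_notMem hu]
          have : opN (f u) ≤ 4 * s := not_lt.1 hu
          linarith [hop u]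
    _ = 4 * s + (sphereUniform N).real B := by
        rw [integral_add (integrable_const _) hind,
          integral_indicator_one hBm]
        simp
    _ ≤ 4 * s + 1 / (2 * n) := by gcongr
    _ ≤ _ := by
        have hsq : √(n : ℝ) ≤ n := by
          rw [Real.sqrt_le_left (by positivity)]; nlinarith
        have : 1 / (2 * (n : ℝ)) ≤ 1 / √(n : ℝ) := by
          gcongr; linarith
        have e : 129 / √(n : ℝ) = 4 * s + 1 / √(n : ℝ) := by rw [hs]; ring
        linarith

end

/-- Since `2 ^ k ≥ 4`, the constant is below `1 / 256`. -/
lemma const_le {k : ℕ} (hk : 2 ≤ k) : (Real.exp (-(1 / 4)) / 4) ^ (2 ^ k) ≤ 1 / 256 := by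
  have h1 : Real.exp (-(1 / 4)) / 4 ≤ 1 / 4 := by
    gcongr
    exact Real.exp_le_one_iff.2 (by norm_num)
  have h4 : 4 ≤ 2 ^ k := (Nat.pow_le_pow_right (by norm_num) hk : 2 ^ 2 ≤ 2 ^ k)
  calc _ ≤ (1 / 4 : ℝ) ^ (2 ^ k) := by gcongr
    _ ≤ (1 / 4 : ℝ) ^ 4 := pow_le_pow_of_le_one (by norm_num) (by norm_num) h4
    _ = _ := by norm_num

end

/-- Fix `k ≥ 2` and let `c = e^{-1/4}/4`. There are constants
`c_d → 1` with `0 < c_d` such that the set `P` of states on `(ℂ^d)^{⊗k}` which are PPT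
across every bipartition satisfies `w(P) ≥ vrad(P) ≥ c_d c^{2^k} / d^{k/2}`; in
particular `liminf_{d→∞} d^{k/2} vrad(P) ≥ c^{2^k}`. -/
theorem fullyPPT_volume_lower_bound (k : ℕ) (hk : 2 ≤ k) :
    ∃ cd : ℕ → ℝ, (∀ d, 0 < cd d) ∧ Filter.Tendsto cd Filter.atTop (nhds 1) ∧
      ∀ f : (d : ℕ) → EuclideanSpace ℝ (Fin ((d ^ k) ^ 2 - 1)) →ₗ[ℝ] MOp k d,
        (∀ d, IsHermParam (f d)) →
        (∀ d, 2 ≤ d →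
          cd d * (Real.exp (-(1 / 4)) / 4) ^ (2 ^ k) / (d : ℝ) ^ ((k : ℝ) / 2) ≤
              matVolRad (f d) (FullyPPT k d) ∧
            matVolRad (f d) (FullyPPT k d) ≤ matMeanWidth (f d) (FullyPPT k d)) ∧
        (Real.exp (-(1 / 4)) / 4) ^ (2 ^ k) ≤
          Filter.liminf
            (fun d : ℕ => (d : ℝ) ^ ((k : ℝ) / 2) * matVolRad (f d) (FullyPPT k d))
            Filter.atTop := by
  -- The constant `1 / 256` of `volRad_lower` already dominates `c ^ (2 ^ k)`, so `c_d = 1` works.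
  refine ⟨fun _ => 1, fun _ => one_pos, tendsto_const_nhds, fun f hf => ?_⟩
  have hpos : ∀ d, 2 ≤ d → 0 < √((d ^ k : ℕ) : ℝ) := fun d hd =>
    Real.sqrt_pos.2 (by exact_mod_cast (four_le_pow hk hd).trans_lt' (by norm_num))
  have hlow : ∀ d, 2 ≤ d → (Real.exp (-(1 / 4)) / 4) ^ (2 ^ k) / √((d ^ k : ℕ) : ℝ) ≤
      matVolRad (f d) (FullyPPT k d) := fun d hd =>
    (div_le_div_of_nonneg_right (const_le hk) (Real.sqrt_nonneg _)).trans
      (volRad_lower (hf d) rfl rfl hk hd)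
  have hurysohn := fun d (hd : 2 ≤ d) => volRad_le_meanWidth (hf d) rfl rfl hk hd
  refine ⟨fun d hd => ⟨?_, hurysohn d hd⟩, ?_⟩
  · rw [one_mul, rpow_half]
    exact hlow d hd
  · -- A real `liminf` is junk for a sequence tending to infinity, so an upper bound is needed too.
    refine Filter.le_liminf_of_le ?_ ?_
    · refine Filter.IsBoundedUnder.isCoboundedUnder_ge ⟨129, ?_⟩
      rw [Filter.eventually_map]
      filter_upwards [Filter.eventually_ge_atTop 2] with d hd
      rw [rpow_half, mul_comm, ← le_div_iff₀ (hpos d hd)]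
      exact (hurysohn d hd).trans (meanWidth_upper (hf d) rfl rfl hk hd)
    · filter_upwards [Filter.eventually_ge_atTop 2] with d hd
      rw [rpow_half, mul_comm, ← div_le_iff₀ (hpos d hd)]
      exact hlow d hd
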